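/- arXiv:2110.02013 — 2 statements merged into one kernel-verified Lean document; each statement's English description precedes it below -/
import Mathlib

section
/- Let B be a brace, and let C and C' be conformal cycles in B with C' ≠ C such that there is an edge e ∈ E(B) ∖ E(C) with both endpoints on C and C' is a subgraph of C + e (the subgraph consisting of C together with e). If there exist a perfect matching M of B and two vertex-disjoint M-alternating paths L and R that form a matching cross over C', then there exists a matching cross over C in B neither of whose two paths contains the edge e. -/
namespace Paper

open SimpleGraph

variable {V : Type*} {W : Type*}

/-- `M` is a perfect matching of the vertex set `S` in the graph `G`:
a set of pairwise disjoint edges of `G`, all within `S`, covering every vertex of `S`. -/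
def IsPMOn (G : SimpleGraph V) (S : Set V) (M : Set (Sym2 V)) : Prop :=
  (∀ e ∈ M, e ∈ G.edgeSet) ∧ (∀ e ∈ M, ∀ v ∈ e, v ∈ S) ∧
    ∀ v ∈ S, ∃! e, e ∈ M ∧ v ∈ e

/-- `M` is a perfect matching of `G`. -/
def IsPM (G : SimpleGraph V) (M : Set (Sym2 V)) : Prop :=
  IsPMOn G Set.univ M

/-- The edges in `F` are pairwise vertex-disjoint. -/
def PairwiseDisjointEdges (F : Set (Sym2 V)) : Prop :=
  ∀ e ∈ F, ∀ f ∈ F, e ≠ f → ∀ x : V, x ∈ e → x ∉ f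

/-- All edges of `G` have both endpoints in `S`. -/
def EdgesWithin (G : SimpleGraph V) (S : Set V) : Prop :=
  ∀ ⦃x y : V⦄, G.Adj x y → x ∈ S ∧ y ∈ S

def ConnectedOn (G : SimpleGraph V) (S : Set V) : Prop :=
  S.Nonempty ∧ ∀ x ∈ S, ∀ y ∈ S, G.Reachable x y

/-- The graph `G` with vertex set `S` is a brace: it is connected and every matching of
size at most two extends to a perfect matching. -/
def IsBraceOn (G : SimpleGraph V) (S : Set V) : Prop :=
  EdgesWithin G S ∧ ConnectedOn G S ∧
    ∀ F : Set (Sym2 V), F ⊆ G.edgeSet → PairwiseDisjointEdges F → F.ncard ≤ 2 →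
      ∃ M, IsPMOn G S M ∧ F ⊆ M

def IsBrace (G : SimpleGraph V) : Prop :=
  IsBraceOn G Set.univ

def IsBipartitionOf (G : SimpleGraph V) (V1 V2 : Set V) : Prop :=
  Disjoint V1 V2 ∧ V1 ∪ V2 = Set.univ ∧ ∀ ⦃x y : V⦄, G.Adj x y → (x ∈ V1 ↔ y ∈ V2)

def IsBipartite (G : SimpleGraph V) : Prop :=
  ∃ V1 V2 : Set V, IsBipartitionOf G V1 V2

def MatchingCoveredOn (G : SimpleGraph V) (S : Set V) : Prop :=
  EdgesWithin G S ∧ ConnectedOn G S ∧ ∀ e ∈ G.edgeSet, ∃ M, IsPMOn G S M ∧ e ∈ M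

def MatchingCovered (G : SimpleGraph V) : Prop :=
  MatchingCoveredOn G Set.univ

/-- Every vertex of `A` is covered exactly once by an edge of `M ∩ Es`;
i.e. `M ∩ Es` is a perfect matching of the subgraph with vertex set `A` and edge set `Es`. -/
def MatchesExactly (M Es : Set (Sym2 V)) (A : Set V) : Prop :=
  ∀ v ∈ A, ∃! e, e ∈ M ∧ e ∈ Es ∧ v ∈ e

/-- `M` restricted to the edges of `P` with both endpoints in `A` is a
perfect matching of `A`; i.e. `M ∩ E(P ∩ A)` is a perfect matching of `P ∩ A`. -/
def WalkMConfOn (G : SimpleGraph V) (M : Set (Sym2 V)) {u v : V} (P : G.Walk u v)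
    (A : Set V) : Prop :=
  ∀ x ∈ A, ∃! e : Sym2 V, e ∈ M ∧ e ∈ P.edges ∧ (∀ y ∈ e, y ∈ A) ∧ x ∈ e

/-- The path `P` is `M`-conformal: `M ∩ E(P)` is a perfect matching of `P`. -/
def MConformalWalk (G : SimpleGraph V) (M : Set (Sym2 V)) {u v : V} (P : G.Walk u v) : Prop :=
  WalkMConfOn G M P {x | x ∈ P.support}

/-- The path `P` is internally `M`-conformal: removing both endpoints leaves
an `M`-conformal path. -/
def InternallyMConformal (G : SimpleGraph V) (M : Set (Sym2 V)) {u v : V}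
    (P : G.Walk u v) : Prop :=
  WalkMConfOn G M P {x | x ∈ P.support ∧ x ≠ u ∧ x ≠ v}

/-- The path `P` is `M`-alternating: there is a set `S` of endpoints of `P`
such that `P − S` is `M`-conformal. -/
def MAlternating (G : SimpleGraph V) (M : Set (Sym2 V)) {u v : V} (P : G.Walk u v) : Prop :=
  ∃ S ⊆ ({u, v} : Set V), WalkMConfOn G M P {x | x ∈ P.support ∧ x ∉ S}

/-- The cycle `C` is `M`-conformal: `M ∩ E(C)` is a perfect matching of `C`. -/
def MConformalCycle (G : SimpleGraph V) (M : Set (Sym2 V)) {c : V} (C : G.Walk c c) : Prop :=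
  ∀ x ∈ C.support, ∃! e, e ∈ M ∧ e ∈ C.edges ∧ x ∈ e

/-- The cycle `C` is conformal in the graph `G` with vertex set `S`:
`G − V(C)` has a perfect matching. -/
def ConformalCycleOn (G : SimpleGraph V) (S : Set V) {c : V} (C : G.Walk c c) : Prop :=
  ∃ M, IsPMOn G (S \ {x | x ∈ C.support}) M

def ConformalCycle (G : SimpleGraph V) {c : V} (C : G.Walk c c) : Prop :=
  ConformalCycleOn G Set.univ C

/-- The four vertices appear on the cycle `C` in the listed cyclic order. -/
def InCyclicOrder (G : SimpleGraph V) {c : V} (C : G.Walk c c) (s1 s2 t1 t2 : V) : Prop :=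
  ∃ n : ℕ, List.Sublist [s1, s2, t1, t2] (C.support.tail.rotate n) ∨
    List.Sublist [s1, s2, t1, t2] (C.support.tail.reverse.rotate n)

/-- The paths `P1` (from `s1` to `t1`) and `P2` (from `s2` to `t2`) form a matching
cross over the cycle `C` with respect to the perfect matching `M` of `(G, S)`. -/
def IsMatchingCrossOn (G : SimpleGraph V) (S : Set V) {c s1 t1 s2 t2 : V}
    (C : G.Walk c c) (M : Set (Sym2 V)) (P1 : G.Walk s1 t1) (P2 : G.Walk s2 t2) : Prop :=
  IsPMOn G S M ∧ [s1, s2, t1, t2].Nodup ∧ InCyclicOrder G C s1 s2 t1 t2 ∧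
    P1.IsPath ∧ P2.IsPath ∧ MAlternating G M P1 ∧ MAlternating G M P2 ∧
    (∀ x : V, x ∈ P1.support → x ∉ P2.support) ∧
    (∀ x ∈ P1.support, x ≠ s1 → x ≠ t1 → x ∉ C.support) ∧
    (∀ x ∈ P2.support, x ≠ s2 → x ≠ t2 → x ∉ C.support)

def HasMatchingCrossOn (G : SimpleGraph V) (S : Set V) {c : V} (C : G.Walk c c) : Prop :=
  ∃ (M : Set (Sym2 V)) (s1 t1 s2 t2 : V) (P1 : G.Walk s1 t1) (P2 : G.Walk s2 t2),
    IsMatchingCrossOn G S C M P1 P2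

def HasMatchingCross (G : SimpleGraph V) {c : V} (C : G.Walk c c) : Prop :=
  HasMatchingCrossOn G Set.univ C

/-- `C + P1 + P2` is a conformal subgraph of `(G, S)`. -/
def CrossConformalOn (G : SimpleGraph V) (S : Set V) {c s1 t1 s2 t2 : V}
    (C : G.Walk c c) (P1 : G.Walk s1 t1) (P2 : G.Walk s2 t2) : Prop :=
  ∃ N, IsPMOn G S N ∧
    MatchesExactly N
      ({f | f ∈ C.edges} ∪ {f | f ∈ P1.edges} ∪ {f | f ∈ P2.edges})
      ({x | x ∈ C.support} ∪ {x | x ∈ P1.support} ∪ {x | x ∈ P2.support})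

/-- There is a conformal cross over the cycle `C` in `G`. -/
def HasConformalCross (G : SimpleGraph V) {c : V} (C : G.Walk c c) : Prop :=
  ∃ (M : Set (Sym2 V)) (s1 t1 s2 t2 : V) (P1 : G.Walk s1 t1) (P2 : G.Walk s2 t2),
    IsMatchingCrossOn G Set.univ C M P1 P2 ∧ CrossConformalOn G Set.univ C P1 P2

/-- A bisubdivision of the graph `H` inside the graph `G`: every edge of `H` is replaced
by a path of odd length (i.e., subdivided an even number of times), and those paths
pairwise meet only in branch vertices. -/
structure Bisubdivision (H : SimpleGraph W) (G : SimpleGraph V) where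
  bv : W → V
  bv_inj : Function.Injective bv
  link : ∀ ⦃x y : W⦄, H.Adj x y → G.Walk (bv x) (bv y)
  link_isPath : ∀ ⦃x y : W⦄ (h : H.Adj x y), (link h).IsPath
  link_odd : ∀ ⦃x y : W⦄ (h : H.Adj x y), Odd (link h).length
  link_symm : ∀ ⦃x y : W⦄ (h : H.Adj x y), link h.symm = (link h).reverse
  link_branch : ∀ ⦃x y : W⦄ (h : H.Adj x y) (z : W), bv z ∈ (link h).support → z = x ∨ z = y
  link_meet : ∀ ⦃x y x' y' : W⦄ (h : H.Adj x y) (h' : H.Adj x' y'), s(x, y) ≠ s(x', y') →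
    ∀ v : V, v ∈ (link h).support → v ∈ (link h').support →
      (v = bv x ∨ v = bv y) ∧ (v = bv x' ∨ v = bv y')

def Bisubdivision.verts {H : SimpleGraph W} {G : SimpleGraph V}
    (L : Bisubdivision H G) : Set V :=
  {v | ∃ (x y : W) (h : H.Adj x y), v ∈ (L.link h).support}

def Bisubdivision.edgeSet {H : SimpleGraph W} {G : SimpleGraph V}
    (L : Bisubdivision H G) : Set (Sym2 V) :=
  {e | ∃ (x y : W) (h : H.Adj x y), e ∈ (L.link h).edges}

/-- The bisubdivision `L` is an `M`-conformal subgraph of `G`. -/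
def Bisubdivision.MConformal {H : SimpleGraph W} {G : SimpleGraph V}
    (L : Bisubdivision H G) (M : Set (Sym2 V)) : Prop :=
  MatchesExactly M L.edgeSet L.verts

/-- The bisubdivision `L` is a conformal subgraph of `(G, S)`. -/
def Bisubdivision.ConformalOn {H : SimpleGraph W} {G : SimpleGraph V}
    (L : Bisubdivision H G) (S : Set V) : Prop :=
  ∃ M, IsPMOn G S M ∧ L.MConformal M

abbrev K33 : SimpleGraph (Fin 3 ⊕ Fin 3) := completeBipartiteGraph (Fin 3) (Fin 3)

/-- `G` contains a conformal bisubdivision of `K_{3,3}`. -/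
def ContainsK33 (G : SimpleGraph V) : Prop :=
  ∃ L : Bisubdivision K33 G, L.ConformalOn Set.univ

def K33Free (G : SimpleGraph V) : Prop :=
  ¬ ContainsK33 G

def C4verts (a1 b1 a2 b2 : V) : Set V := {a1, b1, a2, b2}

def C4edges (a1 b1 a2 b2 : V) : Set (Sym2 V) := {s(a1, b1), s(b1, a2), s(a2, b2), s(b2, a1)}

/-- `a1 b1 a2 b2` is a cycle of length four in `G`. -/
def IsC4In (G : SimpleGraph V) (a1 b1 a2 b2 : V) : Prop :=
  [a1, b1, a2, b2].Nodup ∧ G.Adj a1 b1 ∧ G.Adj b1 a2 ∧ G.Adj a2 b2 ∧ G.Adj b2 a1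

/-- `B` is a 4-cycle sum of the graphs `Bi i` (with vertex sets `Si i`)
at the common conformal 4-cycle `a1 b1 a2 b2`. -/
def IsFourCycleSum {ℓ : ℕ} (B : SimpleGraph V) (Bi : Fin ℓ → SimpleGraph V)
    (Si : Fin ℓ → Set V) (a1 b1 a2 b2 : V) : Prop :=
  (∀ i, EdgesWithin (Bi i) (Si i)) ∧
  (∀ i, IsC4In (Bi i) a1 b1 a2 b2) ∧
  (∀ i, ∃ M, IsPMOn (Bi i) (Si i \ C4verts a1 b1 a2 b2) M) ∧
  (∀ i j, i ≠ j → Si i ∩ Si j = C4verts a1 b1 a2 b2) ∧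
  (⋃ i, Si i) = Set.univ ∧
  ∃ D ⊆ C4edges a1 b1 a2 b2, B.edgeSet = (⋃ i, (Bi i).edgeSet) \ D

/-- `B` is a maximal 4-cycle sum of the braces `Bi i` at the 4-cycle `a1 b1 a2 b2`. -/
def IsMaxFourCycleSumOfBraces {ℓ : ℕ} (B : SimpleGraph V) (Bi : Fin ℓ → SimpleGraph V)
    (Si : Fin ℓ → Set V) (a1 b1 a2 b2 : V) : Prop :=
  IsFourCycleSum B Bi Si a1 b1 a2 b2 ∧ (∀ i, IsBraceOn (Bi i) (Si i)) ∧
    ¬ ∃ ℓ' : ℕ, ℓ < ℓ' ∧ ∃ (Hi : Fin ℓ' → SimpleGraph V) (Ti : Fin ℓ' → Set V),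
      IsFourCycleSum B Hi Ti a1 b1 a2 b2 ∧ ∀ i, IsBraceOn (Hi i) (Ti i)

/-- `∂(X)`: the set of edges of `G` with exactly one endpoint in `X`. -/
def edgeCut (G : SimpleGraph V) (X : Set V) : Set (Sym2 V) :=
  {e | e ∈ G.edgeSet ∧ ∃ x y : V, e = s(x, y) ∧ x ∈ X ∧ y ∉ X}

/-- `∂(X)` is a tight cut of the graph `G` with vertex set `S`. -/
def IsTightCutOn (G : SimpleGraph V) (S X : Set V) : Prop :=
  ∀ M, IsPMOn G S M → (edgeCut G X ∩ M).ncard = 1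

def IsTightCut (G : SimpleGraph V) (X : Set V) : Prop :=
  IsTightCutOn G Set.univ X

/-- The minority of `X` with respect to the colour classes `V1`, `V2`. -/
noncomputable def minority (V1 V2 X : Set V) : Set V :=
  if (X ∩ V1).ncard < (X ∩ V2).ncard then X ∩ V1 else X ∩ V2

/-- `P1` and `P2` are `M`-alternating paths of the same type. -/
def SameType (G : SimpleGraph V) (M : Set (Sym2 V)) {s1 t1 s2 t2 : V}
    (P1 : G.Walk s1 t1) (P2 : G.Walk s2 t2) : Prop :=
  (InternallyMConformal G M P1 ∧ InternallyMConformal G M P2) ∨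
  (MConformalWalk G M P1 ∧ MConformalWalk G M P2) ∨
  ((¬ InternallyMConformal G M P1 ∧ ¬ MConformalWalk G M P1) ∧
    (¬ InternallyMConformal G M P2 ∧ ¬ MConformalWalk G M P2))

/-- There is a strong matching cross over `C` in `(G, S)` w.r.t. colour classes `V1, V2`. -/
def HasStrongMatchingCrossOn (G : SimpleGraph V) (S V1 V2 : Set V) {c : V}
    (C : G.Walk c c) : Prop :=
  ∃ (M : Set (Sym2 V)) (s1 t1 s2 t2 : V) (P1 : G.Walk s1 t1) (P2 : G.Walk s2 t2),
    IsMatchingCrossOn G S C M P1 P2 ∧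
    (V1 ∩ {s1, s2, t1, t2}).ncard = (V2 ∩ {s1, s2, t1, t2}).ncard ∧
    SameType G M P1 P2

/-- `s1 s2 t1 t2` appear in this cyclic order on the 4-cycle `a1 b1 a2 b2`. -/
def CyclicOrderC4 (a1 b1 a2 b2 s1 s2 t1 t2 : V) : Prop :=
  ∃ n : ℕ, [s1, s2, t1, t2] = [a1, b1, a2, b2].rotate n ∨
    [s1, s2, t1, t2] = [b2, a2, b1, a1].rotate n

/-- `P1, P2` form a matching cross over the 4-cycle `a1 b1 a2 b2` w.r.t. `M`. -/
def IsCrossOverC4 (G : SimpleGraph V) (M : Set (Sym2 V)) (a1 b1 a2 b2 : V)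
    {s1 t1 s2 t2 : V} (P1 : G.Walk s1 t1) (P2 : G.Walk s2 t2) : Prop :=
  [s1, s2, t1, t2].Nodup ∧ CyclicOrderC4 a1 b1 a2 b2 s1 s2 t1 t2 ∧
    P1.IsPath ∧ P2.IsPath ∧ MAlternating G M P1 ∧ MAlternating G M P2 ∧
    (∀ z : V, z ∈ P1.support → z ∉ P2.support) ∧
    (∀ z ∈ P1.support, z ≠ s1 → z ≠ t1 → z ∉ C4verts a1 b1 a2 b2) ∧
    (∀ z ∈ P2.support, z ≠ s2 → z ≠ t2 → z ∉ C4verts a1 b1 a2 b2)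

/-- The Heawood graph on `ZMod 14`. -/
def heawood : SimpleGraph (ZMod 14) :=
  SimpleGraph.fromRel fun i j => j = i + 1 ∨ (Even i.val ∧ j = i + 5)

/-- The Rotunda: three cubes glued along a common 4-cycle whose edges are then deleted. -/
def rotunda : SimpleGraph (Fin 4 ⊕ Fin 3 × Fin 4) :=
  SimpleGraph.fromRel fun x y =>
    match x, y with
    | Sum.inl j, Sum.inr p => j = p.2
    | Sum.inr p, Sum.inr q => p.1 = q.1 ∧ q.2 = p.2 + 1
    | _, _ => False

/-- `F` is an `S`-cover in `G`. -/
def IsSCover (G : SimpleGraph V) (S : Set V) (F : Set (Sym2 V)) : Prop :=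
  F ⊆ G.edgeSet ∧ (∀ e ∈ F, ∃ v ∈ S, v ∈ e) ∧ ∀ v ∈ S, ∃ e ∈ F, v ∈ e

/-- `F` is contained in some perfect matching of `G`. -/
def Extendible (G : SimpleGraph V) (F : Set (Sym2 V)) : Prop :=
  ∃ M, IsPM G M ∧ F ⊆ M

/-- `(G, S)` is an `F`-instance of 2-MLP for `(a1, a2)` and `(b1, b2)`. -/
def TwoMLPInstanceOn (G : SimpleGraph V) (S : Set V) (a1 a2 b1 b2 : V)
    (F : Set (Sym2 V)) : Prop :=
  ∃ M, IsPMOn G S M ∧ F ⊆ M ∧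
    ∃ (P1 : G.Walk a1 b1) (P2 : G.Walk a2 b2), P1.IsPath ∧ P2.IsPath ∧
      InternallyMConformal G M P1 ∧ InternallyMConformal G M P2 ∧
      ∀ x : V, x ∈ P1.support → x ∉ P2.support

/-- `B − u − v + pq`: delete the vertices `u, v` and add the edge `pq`. -/
def deleteAdd (B : SimpleGraph V) (u v p q : V) : SimpleGraph V :=
  SimpleGraph.fromRel fun x y =>
    (B.Adj x y ∨ (x = p ∧ y = q)) ∧ x ≠ u ∧ x ≠ v ∧ y ≠ u ∧ y ≠ v

/-- `B` plus two new vertices `x = Sum.inr 0` and `y = Sum.inr 1` together with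
the edges `xy, x b1, x b2, y a1, y a2`. -/
def plusXY (B : SimpleGraph V) (a1 a2 b1 b2 : V) : SimpleGraph (V ⊕ Fin 2) :=
  SimpleGraph.fromRel fun p q =>
    (∃ a b : V, p = Sum.inl a ∧ q = Sum.inl b ∧ B.Adj a b) ∨
    (p = Sum.inr 0 ∧ q = Sum.inr 1) ∨
    (p = Sum.inr 0 ∧ (q = Sum.inl b1 ∨ q = Sum.inl b2)) ∨
    (p = Sum.inr 1 ∧ (q = Sum.inl a1 ∨ q = Sum.inl a2))

/-- The endpoints `q1, q2` (on the 4-cycle) belong to the same colour class. -/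
def PrecrossDaring (V1 V2 : Set V) (q1 q2 : V) : Prop :=
  (q1 ∈ V1 ∧ q2 ∈ V1) ∨ (q1 ∈ V2 ∧ q2 ∈ V2)

/-- `(P1, P2, Q, M)` is a diffuse `C'`-`M`-precross through the 4-cycle `a1 b1 a2 b2`
in the graph `G` with vertex set `S` and colour classes `V1, V2`. -/
def DiffusePrecross (G : SimpleGraph V) (S V1 V2 : Set V) (a1 b1 a2 b2 : V)
    {c p1 q1 p2 q2 x1 x2 : V} (C' : G.Walk c c) (M : Set (Sym2 V))
    (P1 : G.Walk p1 q1) (P2 : G.Walk p2 q2) (Q : G.Walk x1 x2) : Prop :=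
  IsPMOn G S M ∧ P1.IsPath ∧ P2.IsPath ∧ Q.IsPath ∧
  MAlternating G M P1 ∧ MAlternating G M P2 ∧ MAlternating G M Q ∧
  (∀ z : V, z ∈ P1.support → z ∉ P2.support) ∧
  (∀ z : V, z ∈ P1.support → z ∉ Q.support) ∧
  (∀ z : V, z ∈ P2.support → z ∉ Q.support) ∧
  (∀ z ∈ P1.support, z ≠ p1 → z ≠ q1 → z ∉ C'.support) ∧
  (∀ z ∈ P2.support, z ≠ p2 → z ≠ q2 → z ∉ C'.support) ∧
  (∀ z ∈ Q.support, z ≠ x1 → z ≠ x2 → z ∉ C'.support) ∧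
  x1 ∈ C'.support ∧ x2 ∈ C'.support ∧
  p1 ∈ C'.support ∧ q1 ∈ C4verts a1 b1 a2 b2 ∧
  p2 ∈ C'.support ∧ q2 ∈ C4verts a1 b1 a2 b2 ∧
  (∀ Wk : G.Walk p1 p2, (∀ e ∈ Wk.edges, e ∈ C'.edges) → ∃ z ∈ Wk.support, z ∈ Q.support) ∧
  (∀ U ∈ ({V1, V2} : Set (Set V)), (q1 ∈ U ∨ q2 ∈ U) →
    ∃ q : V, (q = q1 ∨ q = q2) ∧ q ∈ U ∧ ∃ e ∈ M, e ∈ C4edges a1 b1 a2 b2 ∧ q ∈ e)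

/-- A daring diffuse precross is successful. -/
def PrecrossSuccessful (G : SimpleGraph V) (V1 V2 : Set V) (M : Set (Sym2 V))
    {p1 q1 p2 q2 : V} (P1 : G.Walk p1 q1) (P2 : G.Walk p2 q2) : Prop :=
  PrecrossDaring V1 V2 q1 q2 ∧
  ((InternallyMConformal G M P1 ∧ MConformalWalk G M P2) ∨
   (InternallyMConformal G M P2 ∧ MConformalWalk G M P1) ∨
   (Even P1.length ∧ Even P2.length ∧
     ((∃ e ∈ M, e ∈ P1.edges ∧ p1 ∈ e) ↔ ¬ ∃ e ∈ M, e ∈ P2.edges ∧ p2 ∈ e)))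

/-! ### Positions on a list and crossing -/

/-- `z` lies strictly between `p` and `q`. -/
def NBtw (p q z : ℕ) : Prop := (p < z ∧ z < q) ∨ (q < z ∧ z < p)

/-- `p, q` and `r, s` cross, for natural numbers. -/
def NCross (p q r s : ℕ) : Prop := ¬ (NBtw p q r ↔ NBtw p q s)

lemma ncross_symm {p q r s : ℕ} (h : NCross p q r s) (h1 : p ≠ r) (h2 : p ≠ s) (h3 : q ≠ r)
    (h4 : q ≠ s) : NCross r s p q := by
  unfold NCross NBtw at *
  omega

lemma ncross_cases {a b c d : ℕ} (h : NCross a b c d) (hab : a ≠ b) (hac : a ≠ c) (had : a ≠ d)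
    (hbc : b ≠ c) (hbd : b ≠ d) :
    (a < c ∧ c < b ∧ b < d) ∨ (c < b ∧ b < d ∧ d < a) ∨ (b < d ∧ d < a ∧ a < c) ∨
      (d < a ∧ a < c ∧ c < b) ∨ (d < b ∧ b < c ∧ c < a) ∨ (a < d ∧ d < b ∧ b < c) ∨
      (c < a ∧ a < d ∧ d < b) ∨ (b < c ∧ c < a ∧ a < d) := by
  unfold NCross NBtw at h
  rcases lt_or_gt_of_ne hab with h1 | h1 <;> rcases lt_or_gt_of_ne hac with h2 | h2 <;>
  rcases lt_or_gt_of_ne had with h3 | h3 <;> rcases lt_or_gt_of_ne hbc with h4 | h4 <;>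
  rcases lt_or_gt_of_ne hbd with h5 | h5 <;>
  first
  | (exfalso; omega)
  | exact Or.inl (by omega)
  | exact Or.inr (Or.inl (by omega))
  | exact Or.inr (Or.inr (Or.inl (by omega)))
  | exact Or.inr (Or.inr (Or.inr (Or.inl (by omega))))
  | exact Or.inr (Or.inr (Or.inr (Or.inr (Or.inl (by omega)))))
  | exact Or.inr (Or.inr (Or.inr (Or.inr (Or.inr (Or.inl (by omega))))))
  | exact Or.inr (Or.inr (Or.inr (Or.inr (Or.inr (Or.inr (Or.inl (by omega)))))))
  | exact Or.inr (Or.inr (Or.inr (Or.inr (Or.inr (Or.inr (Or.inr (by omega)))))))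

lemma sublist_of_lt [DecidableEq V] {l : List V} {a b c d : V}
    (hd : d ∈ l) (h1 : l.idxOf a < l.idxOf b)
    (h2 : l.idxOf b < l.idxOf c) (h3 : l.idxOf c < l.idxOf d) :
    List.Sublist [a, b, c, d] l := by
  have hd' : l.idxOf d < l.length := List.idxOf_lt_length_of_mem hd
  have key := List.map_getElem_sublist (l := l)
    (is := [⟨l.idxOf a, by omega⟩, ⟨l.idxOf b, by omega⟩, ⟨l.idxOf c, by omega⟩,
      ⟨l.idxOf d, by omega⟩]) (by simp; omega)
  simpa using key

lemma rot_sublist {l : List V} {a b c d : V} (h : List.Sublist [a, b, c, d] l) :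
    ∃ n, List.Sublist [b, c, d, a] (l.rotate n) := by
  obtain ⟨l1, l2, rfl, h1, h2⟩ := List.cons_sublist_iff.mp h
  obtain ⟨u, v, rfl⟩ := List.append_of_mem h1
  refine ⟨u.length + 1, ?_⟩
  have : (u ++ a :: v ++ l2) = (u ++ [a]) ++ (v ++ l2) := by simp
  rw [this]
  have e : u.length + 1 = (u ++ [a]).length := by simp
  rw [e, List.rotate_append_length_eq]
  have : List.Sublist ([b, c, d] ++ [a]) ((v ++ l2) ++ (u ++ [a])) := by
    apply List.Sublist.append
    · exact h2.trans (List.sublist_append_right _ _)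
    · exact List.sublist_append_right _ _
  simpa using this

lemma rot_sublist' {l : List V} {a b c d : V} (h : ∃ n, List.Sublist [a, b, c, d] (l.rotate n)) :
    ∃ n, List.Sublist [b, c, d, a] (l.rotate n) := by
  obtain ⟨n, h⟩ := h
  obtain ⟨m, h⟩ := rot_sublist h
  exact ⟨n + m, by rwa [List.rotate_rotate] at h⟩

lemma cyc_of_cross [DecidableEq V] {l : List V} {a b c d : V}
    (ha : a ∈ l) (hb : b ∈ l) (hc : c ∈ l) (hd : d ∈ l)
    (hab : a ≠ b) (hac : a ≠ c) (had : a ≠ d) (hbc : b ≠ c) (hbd : b ≠ d)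
    (h : NCross (l.idxOf a) (l.idxOf b) (l.idxOf c) (l.idxOf d)) :
    ∃ n : ℕ, List.Sublist [a, c, b, d] (l.rotate n) ∨
      List.Sublist [a, c, b, d] (l.reverse.rotate n) := by
  have inj : ∀ {u v : V}, u ∈ l → u ≠ v → l.idxOf u ≠ l.idxOf v :=
    fun hu huv he => huv ((List.idxOf_inj hu).mp he)
  have i1 := inj ha hab
  have i2 := inj ha hac
  have i3 := inj ha had
  have i4 := inj hb hbc
  have i5 := inj hb hbd
  have fwd : ∀ {p q r s : V}, s ∈ l → l.idxOf p < l.idxOf q → l.idxOf q < l.idxOf r →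
      l.idxOf r < l.idxOf s → ∃ n, List.Sublist [p, q, r, s] (l.rotate n) :=
    fun hs h1 h2 h3 => ⟨0, by simpa using sublist_of_lt hs h1 h2 h3⟩
  have bwd : ∀ {p q r s : V}, s ∈ l → l.idxOf p < l.idxOf q → l.idxOf q < l.idxOf r →
      l.idxOf r < l.idxOf s → ∃ n, List.Sublist [s, r, q, p] (l.reverse.rotate n) :=
    fun hs h1 h2 h3 => ⟨0, by simpa using (sublist_of_lt hs h1 h2 h3).reverse⟩
  have cases : (∃ n, List.Sublist [a, c, b, d] (l.rotate n)) ∨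
      (∃ n, List.Sublist [a, c, b, d] (l.reverse.rotate n)) := by
    have := ncross_cases h i1 i2 i3 i4 i5
    rcases this with h | h | h | h | h | h | h | h <;> obtain ⟨h1, h2, h3⟩ := h
    · exact Or.inl (fwd hd h1 h2 h3)
    · exact Or.inl (rot_sublist' (rot_sublist' (rot_sublist' (fwd ha h1 h2 h3))))
    · exact Or.inl (rot_sublist' (rot_sublist' (fwd hc h1 h2 h3)))
    · exact Or.inl (rot_sublist' (fwd hb h1 h2 h3))
    · exact Or.inr (bwd ha h1 h2 h3)
    · exact Or.inr (rot_sublist' (rot_sublist' (rot_sublist' (bwd hc h1 h2 h3))))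
    · exact Or.inr (rot_sublist' (rot_sublist' (bwd hb h1 h2 h3)))
    · exact Or.inr (rot_sublist' (bwd hd h1 h2 h3))
  rcases cases with ⟨n, h⟩ | ⟨n, h⟩
  · exact ⟨n, Or.inl h⟩
  · exact ⟨n, Or.inr h⟩

lemma exists_idx_of_sublist {l : List V} {a b c d : V} (h : List.Sublist [a, b, c, d] l) :
    ∃ (i j k m : ℕ) (hm : m < l.length) (hij : i < j) (hjk : j < k) (hkm : k < m),
      a = l[i] ∧ b = l[j] ∧ c = l[k] ∧ d = l[m] := by
  obtain ⟨is, h1, h2⟩ := List.sublist_eq_map_getElem h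
  match is, h1, h2 with
  | [i, j, k, m], h1, h2 =>
    simp at h1 h2
    exact ⟨i, j, k, m, m.2, by have := h2.1.1; omega, by have := h2.2.1.1; omega,
      by have := h2.2.2; omega, h1⟩

lemma mod_cases (i r N : ℕ) (hi : i < N) (hr : r < N) :
    ((i + r) % N = i + r ∧ i + r < N) ∨ ((i + r) % N = i + r - N ∧ N ≤ i + r) := by
  by_cases h : i + r < N
  · exact Or.inl ⟨Nat.mod_eq_of_lt h, h⟩
  · right
    refine ⟨?_, by omega⟩
    rw [Nat.mod_eq_sub_mod (by omega), Nat.mod_eq_of_lt (by omega)]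

lemma cross_of_sublist_rotate [DecidableEq V] {l : List V} (hl : l.Nodup) {a b c d : V} {n : ℕ}
    (h : List.Sublist [a, c, b, d] (l.rotate n)) :
    NCross (l.idxOf a) (l.idxOf b) (l.idxOf c) (l.idxOf d) := by
  obtain ⟨i, j, k, m, hm, hij, hjk, hkm, rfl, rfl, rfl, rfl⟩ := exists_idx_of_sublist h
  have hlen : (l.rotate n).length = l.length := List.length_rotate ..
  have hpos : 0 < l.length := by omega
  have hr : n % l.length < l.length := Nat.mod_lt _ hpos
  simp only [List.getElem_rotate, hl.idxOf_getElem]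
  have e : ∀ t, (t + n) % l.length = (t + n % l.length) % l.length := fun t => by simp
  rw [e i, e j, e k, e m]
  generalize n % l.length = r at *
  have c1 := mod_cases i r l.length (by omega) hr
  have c2 := mod_cases j r l.length (by omega) hr
  have c3 := mod_cases k r l.length (by omega) hr
  have c4 := mod_cases m r l.length (by omega) hr
  unfold NCross NBtw
  omega

lemma idxOf_reverse_nodup [DecidableEq V] {l : List V} (hl : l.Nodup) {v : V} (hv : v ∈ l) :
    l.reverse.idxOf v + l.idxOf v + 1 = l.length := by
  have h := List.idxOf_lt_length_of_mem hv
  have e : v = l.reverse[l.length - 1 - l.idxOf v]'(by simp; omega) := by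
    rw [List.getElem_reverse]
    have : l.length - 1 - (l.length - 1 - l.idxOf v) = l.idxOf v := by omega
    simp [this]
  have e2 := (List.nodup_reverse.mpr hl).idxOf_getElem (l.length - 1 - l.idxOf v)
    (by simp; omega)
  rw [← e] at e2
  omega

lemma cross_of_cyc [DecidableEq V] {l : List V} (hl : l.Nodup) {a b c d : V}
    (h : ∃ n : ℕ, List.Sublist [a, c, b, d] (l.rotate n) ∨
      List.Sublist [a, c, b, d] (l.reverse.rotate n)) :
    (a ∈ l ∧ b ∈ l ∧ c ∈ l ∧ d ∈ l) ∧
      NCross (l.idxOf a) (l.idxOf b) (l.idxOf c) (l.idxOf d) := by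
  obtain ⟨n, h | h⟩ := h
  · have hs := h.subset
    simp at hs
    exact ⟨by tauto, cross_of_sublist_rotate hl h⟩
  · have hs := h.subset
    simp at hs
    obtain ⟨ha, hc, hb, hd⟩ := hs
    have h2 := cross_of_sublist_rotate (List.nodup_reverse.mpr hl) h
    have r1 := idxOf_reverse_nodup hl ha
    have r2 := idxOf_reverse_nodup hl hb
    have r3 := idxOf_reverse_nodup hl hc
    have r4 := idxOf_reverse_nodup hl hd
    refine ⟨⟨ha, hb, hc, hd⟩, ?_⟩
    unfold NCross NBtw at *
    omega

/-! ### Cycles and positions -/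

lemma cycle_mem_tail {G : SimpleGraph V} {c : V} {C : G.Walk c c} (hC : C.IsCycle) {v : V} :
    v ∈ C.support.tail ↔ v ∈ C.support := by
  constructor
  · exact List.mem_of_mem_tail
  · intro h
    rw [← C.cons_tail_support, List.mem_cons] at h
    rcases h with rfl | h
    · exact C.end_mem_tail_support hC.not_nil
    · exact h

lemma tail_getElem {G : SimpleGraph V} {c : V} {C : G.Walk c c} (i : ℕ)
    (h : i < C.support.tail.length) : C.support.tail[i] = C.getVert (i + 1) := by
  simp [Walk.support_getElem_eq_getVert]

lemma cycle_edge {G : SimpleGraph V} {c : V} {C : G.Walk c c} (i : ℕ)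
    (h : i + 1 < C.support.tail.length) :
    s(C.support.tail[i], C.support.tail[i + 1]) ∈ C.edges := by
  rw [tail_getElem, tail_getElem]
  apply (Walk.mk_mem_edges_iff_exists _).mpr
  simp at h
  exact ⟨i + 1, by omega, by simp⟩

lemma cycle_edge_last {G : SimpleGraph V} {c : V} {C : G.Walk c c}
    (h : 0 < C.support.tail.length) :
    s(C.support.tail[C.support.tail.length - 1], C.support.tail[0]) ∈ C.edges := by
  rw [tail_getElem, tail_getElem]
  apply (Walk.mk_mem_edges_iff_exists _).mpr
  simp at h
  refine ⟨0, by omega, ?_⟩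
  have : C.length - 1 + 1 = C.length := by omega
  simp [this]

lemma cycle_edge_pos [DecidableEq V] {G : SimpleGraph V} {c : V} {C : G.Walk c c}
    (hC : C.IsCycle) {u v : V} (h : s(u, v) ∈ C.edges) :
    let l := C.support.tail
    l.idxOf u + 1 = l.idxOf v ∨ l.idxOf v + 1 = l.idxOf u ∨
      (l.idxOf u = 0 ∧ l.idxOf v + 1 = l.length) ∨
      (l.idxOf v = 0 ∧ l.idxOf u + 1 = l.length) := by
  intro l
  have hnd : l.Nodup := hC.support_nodup
  have hlen : l.length = C.length := by simp [l]
  have h3 := hC.three_le_length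
  have key : ∀ i, i < C.length → l.idxOf (C.getVert (i + 1)) = i := by
    intro i hi
    have := hnd.idxOf_getElem i (by omega)
    rwa [tail_getElem] at this
  have key0 : l.idxOf (C.getVert 0) = C.length - 1 := by
    have := key (C.length - 1) (by omega)
    have e : C.length - 1 + 1 = C.length := by omega
    rw [e] at this
    simpa using this
  obtain ⟨i, hi, hu⟩ := (Walk.mk_mem_edges_iff_exists _).mp h
  have k1 := key i hi
  have k2 : (i = 0 ∧ l.idxOf (C.getVert i) = C.length - 1) ∨
      (0 < i ∧ l.idxOf (C.getVert i) = i - 1) := by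
    rcases Nat.eq_zero_or_pos i with rfl | hp
    · exact Or.inl ⟨rfl, key0⟩
    · right
      have := key (i - 1) (by omega)
      have e : i - 1 + 1 = i := by omega
      rw [e] at this
      exact ⟨hp, this⟩
  simp only [Sym2.eq_iff] at hu
  rcases hu with ⟨rfl, rfl⟩ | ⟨rfl, rfl⟩ <;> omega

/-! ### Separation on a cycle -/

/-- Removing `a, b` from the graph with edge set `E` separates `c` from `d`. -/
def Sep (E : Set (Sym2 V)) (a b c d : V) : Prop :=
  ∃ f : V → Prop, (∀ u v, s(u, v) ∈ E → u ≠ a → u ≠ b → v ≠ a → v ≠ b → (f u ↔ f v)) ∧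
    ¬ (f c ↔ f d)

lemma sep_of_cross [DecidableEq V] {G : SimpleGraph V} {c₀ : V} {C : G.Walk c₀ c₀}
    (hC : C.IsCycle) {a b c d : V} (ha : a ∈ C.support.tail) (hb : b ∈ C.support.tail)
    (h : NCross (C.support.tail.idxOf a) (C.support.tail.idxOf b) (C.support.tail.idxOf c)
      (C.support.tail.idxOf d)) : Sep {f | f ∈ C.edges} a b c d := by
  refine ⟨fun v => NBtw (C.support.tail.idxOf a) (C.support.tail.idxOf b)
    (C.support.tail.idxOf v), ?_, h⟩
  intro u v huv hua hub hva hvb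
  have hp := cycle_edge_pos hC huv
  simp only at hp
  have mu : u ∈ C.support.tail := (cycle_mem_tail hC).mpr (C.fst_mem_support_of_mem_edges huv)
  have mv : v ∈ C.support.tail := (cycle_mem_tail hC).mpr (C.snd_mem_support_of_mem_edges huv)
  have inj : ∀ {u v : V}, u ∈ C.support.tail → u ≠ v →
      C.support.tail.idxOf u ≠ C.support.tail.idxOf v :=
    fun hu huv he => huv ((List.idxOf_inj hu).mp he)
  have i1 := inj mu hua
  have i2 := inj mu hub
  have i3 := inj mv hva
  have i4 := inj mv hvb
  have la := List.idxOf_lt_length_of_mem ha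
  have lb := List.idxOf_lt_length_of_mem hb
  unfold NBtw
  rcases hp with hp | hp | hp | hp <;> omega

lemma const_run {l : List V} {f : V → Prop} {a b : V}
    (he : ∀ i (h : i + 1 < l.length), l[i] ≠ a → l[i] ≠ b → l[i + 1] ≠ a → l[i + 1] ≠ b →
      (f l[i] ↔ f l[i + 1])) (i k : ℕ) (hk : i + k < l.length)
    (hav : ∀ j (hj : j < l.length), i ≤ j → j ≤ i + k → l[j] ≠ a ∧ l[j] ≠ b) :
    f l[i] ↔ f l[i + k] := by
  induction k with
  | zero => simp
  | succ k ih =>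
    have h1 := ih (by omega) (fun j hj h1 h2 => hav j hj h1 (by omega))
    have h2 := hav (i + k) (by omega) (by omega) (by omega)
    have h3 := hav (i + k + 1) (by omega) (by omega) (by omega)
    exact h1.trans (he (i + k) (by omega) h2.1 h2.2 h3.1 h3.2)

lemma not_ncross_wrap {a b c d : ℕ} (hn : ¬ NCross a b c d) (hcd : c ≤ d) (ic : c ≠ a) (ic' : c ≠ b)
    (id : d ≠ a) (id' : d ≠ b) (h2 : ¬ ((a < c ∨ d < a) ∧ (b < c ∨ d < b))) :
    c < a ∧ c < b ∧ a < d ∧ b < d := by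
  unfold NCross NBtw at hn
  rcases lt_or_gt_of_ne ic with h1 | h1 <;> rcases lt_or_gt_of_ne ic' with h3 | h3 <;>
  rcases lt_or_gt_of_ne id with h4 | h4 <;> rcases lt_or_gt_of_ne id' with h5 | h5 <;>
  first
  | exact ⟨h1, h3, h4, h5⟩
  | (exfalso; omega)

lemma cross_of_sep [DecidableEq V] {G : SimpleGraph V} {c₀ : V} {C : G.Walk c₀ c₀}
    (hC : C.IsCycle) {a b c d : V}
    (hc : c ∈ C.support.tail) (hd : d ∈ C.support.tail)
    (hac : c ≠ a) (had : d ≠ a) (hbc : c ≠ b) (hbd : d ≠ b)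
    (h : Sep {f | f ∈ C.edges} a b c d) :
    NCross (C.support.tail.idxOf a) (C.support.tail.idxOf b) (C.support.tail.idxOf c)
      (C.support.tail.idxOf d) := by
  obtain ⟨f, hf, hfcd⟩ := h
  have hnd : C.support.tail.Nodup := hC.support_nodup
  have e1 : ∀ i (h : i + 1 < C.support.tail.length),
      C.support.tail[i]'(Nat.lt_of_succ_lt h) ≠ a → C.support.tail[i]'(Nat.lt_of_succ_lt h) ≠ b →
      C.support.tail[i + 1]'h ≠ a → C.support.tail[i + 1]'h ≠ b →
      (f (C.support.tail[i]'(Nat.lt_of_succ_lt h)) ↔ f (C.support.tail[i + 1]'h)) :=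
    fun i h => hf _ _ (cycle_edge (C := C) i h)
  have e2 : ∀ (h : 0 < C.support.tail.length),
      C.support.tail[C.support.tail.length - 1]'(Nat.sub_one_lt_of_lt h) ≠ a →
      C.support.tail[C.support.tail.length - 1]'(Nat.sub_one_lt_of_lt h) ≠ b →
      C.support.tail[0]'h ≠ a → C.support.tail[0]'h ≠ b →
      (f (C.support.tail[C.support.tail.length - 1]'(Nat.sub_one_lt_of_lt h)) ↔
        f (C.support.tail[0]'h)) :=
    fun h => hf _ _ (cycle_edge_last (C := C) h)
  revert e1 e2 hnd hc hd
  generalize C.support.tail = l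
  intro hc hd hnd e1 e2
  have lc := List.idxOf_lt_length_of_mem hc
  have ld := List.idxOf_lt_length_of_mem hd
  have ic : l.idxOf c ≠ l.idxOf a := fun he => hac ((List.idxOf_inj hc).mp he)
  have ic' : l.idxOf c ≠ l.idxOf b := fun he => hbc ((List.idxOf_inj hc).mp he)
  have id : l.idxOf d ≠ l.idxOf a := fun he => had ((List.idxOf_inj hd).mp he)
  have id' : l.idxOf d ≠ l.idxOf b := fun he => hbd ((List.idxOf_inj hd).mp he)
  have run : ∀ i j (hj : j < l.length) (hij : i ≤ j), (l.idxOf a < i ∨ j < l.idxOf a) →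
      (l.idxOf b < i ∨ j < l.idxOf b) → (f l[i] ↔ f l[j]) := by
    intro i j hj hij ha hb
    obtain ⟨k, rfl⟩ := Nat.exists_eq_add_of_le hij
    refine const_run e1 i k hj ?_
    intro t ht h1 h2
    have := hnd.idxOf_getElem t ht
    constructor
    · intro he
      rw [he] at this
      omega
    · intro he
      rw [he] at this
      omega
  have runL : ∀ u v : V, u ∈ l → v ∈ l → l.idxOf u ≤ l.idxOf v →
      (l.idxOf a < l.idxOf u ∨ l.idxOf v < l.idxOf a) →
      (l.idxOf b < l.idxOf u ∨ l.idxOf v < l.idxOf b) → (f u ↔ f v) := by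
    intro u v hu hv h0 h1 h2
    have := run (l.idxOf u) (l.idxOf v) (List.idxOf_lt_length_of_mem hv) h0 h1 h2
    simpa using this
  have wrap : ∀ u v : V, u ∈ l → v ∈ l → l.idxOf u < l.idxOf a → l.idxOf u < l.idxOf b →
      l.idxOf a < l.idxOf v → l.idxOf b < l.idxOf v → (f u ↔ f v) := by
    intro u v hu hv h0 h1 h2 h3
    have lv := List.idxOf_lt_length_of_mem hv
    have r1 := run 0 (l.idxOf u) (by omega) (by omega) (by omega) (by omega)
    have r2 := run (l.idxOf v) (l.length - 1) (by omega) (by omega) (by omega) (by omega)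
    simp only [List.getElem_idxOf] at r1 r2
    have p0 := hnd.idxOf_getElem 0 (by omega)
    have p1 := hnd.idxOf_getElem (l.length - 1) (by omega)
    have r3 := e2 (by omega) (by intro he; rw [he] at p1; omega)
      (by intro he; rw [he] at p1; omega) (by intro he; rw [he] at p0; omega)
      (by intro he; rw [he] at p0; omega)
    tauto
  by_contra hn
  apply hfcd
  have A := runL c d hc hd
  have A' := runL d c hd hc
  have W := wrap c d hc hd
  have W' := wrap d c hd hc
  clear run runL wrap e1 e2 hf hfcd
  by_cases h1 : l.idxOf c ≤ l.idxOf d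
  · by_cases h2 : (l.idxOf a < l.idxOf c ∨ l.idxOf d < l.idxOf a) ∧
        (l.idxOf b < l.idxOf c ∨ l.idxOf d < l.idxOf b)
    · exact A h1 h2.1 h2.2
    · obtain ⟨w1, w2, w3, w4⟩ := not_ncross_wrap hn h1 ic ic' id id' h2
      exact W w1 w2 w3 w4
  · by_cases h2 : (l.idxOf a < l.idxOf d ∨ l.idxOf c < l.idxOf a) ∧
        (l.idxOf b < l.idxOf d ∨ l.idxOf c < l.idxOf b)
    · exact (A' (by omega) h2.1 h2.2).symm
    · obtain ⟨w1, w2, w3, w4⟩ := not_ncross_wrap (fun h => hn fun e => h e.symm) (by omega)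
        id id' ic ic' h2
      exact (W' w1 w2 w3 w4).symm

/-! ### Comparing the two cycles -/

/-- If all edges of the second cycle at a vertex are on the first, then the converse holds. -/
lemma edge_transfer {G : SimpleGraph V} {c c' : V} {C : G.Walk c c} {C' : G.Walk c' c'}
    (hC : C.IsCycle) (hC' : C'.IsCycle) {v : V} (hv' : v ∈ C'.support)
    (hsub : ∀ w, s(v, w) ∈ C'.edges → s(v, w) ∈ C.edges) {w : V} (hw : s(v, w) ∈ C.edges) :
    s(v, w) ∈ C'.edges := by
  have hv : v ∈ C.support := C.fst_mem_support_of_mem_edges hw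
  have n1 := hC.ncard_neighborSet_toSubgraph_eq_two hv
  have n2 := hC'.ncard_neighborSet_toSubgraph_eq_two hv'
  have hs : C'.toSubgraph.neighborSet v ⊆ C.toSubgraph.neighborSet v := by
    intro w hw
    rw [Subgraph.mem_neighborSet, Walk.adj_toSubgraph_iff_mem_edges] at *
    exact hsub w hw
  have := Set.eq_of_subset_of_ncard_le hs (by omega) C.finite_neighborSet_toSubgraph
  have hw' : w ∈ C.toSubgraph.neighborSet v := by
    rw [Subgraph.mem_neighborSet, Walk.adj_toSubgraph_iff_mem_edges]
    exact hw
  rw [← this, Subgraph.mem_neighborSet, Walk.adj_toSubgraph_iff_mem_edges] at hw'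
  exact hw'

lemma closed_set_of_walk {G : SimpleGraph V} {u v : V} (P : G.Walk u v) (X : Set V)
    (hX : ∀ a b, s(a, b) ∈ P.edges → a ∈ X → b ∈ X) {w : V} (hw : w ∈ P.support) (hu : u ∈ X) :
    w ∈ X := by
  induction P with
  | nil =>
    simp at hw
    rwa [hw]
  | cons h p ih =>
    simp only [Walk.support_cons, List.mem_cons] at hw
    rcases hw with rfl | hw
    · exact hu
    · exact ih (fun a b hab => hX a b (by simp [hab])) hw (hX _ _ (by simp) hu)

lemma closed_cycle {G : SimpleGraph V} {c : V} (C : G.Walk c c) (X : Set V)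
    (hX : ∀ a b, s(a, b) ∈ C.edges → a ∈ X → b ∈ X) {v w : V} (hv : v ∈ C.support)
    (hvX : v ∈ X) (hw : w ∈ C.support) : w ∈ X := by
  have hc : c ∈ X := by
    by_contra hc
    have := closed_set_of_walk C Xᶜ
      (fun a b hab ha hb => ha (hX b a (by rwa [Sym2.eq_swap]) hb)) hv hc
    exact this hvX
  exact closed_set_of_walk C X hX hw hc

lemma exists_edge_of_mem {G : SimpleGraph V} {c : V} {C : G.Walk c c} (hC : C.IsCycle) {v : V}
    (hv : v ∈ C.support) : ∃ w, s(v, w) ∈ C.edges := by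
  have n1 := hC.ncard_neighborSet_toSubgraph_eq_two hv
  obtain ⟨w, hw⟩ := Set.nonempty_of_ncard_ne_zero (s := C.toSubgraph.neighborSet v) (by omega)
  rw [Subgraph.mem_neighborSet, Walk.adj_toSubgraph_iff_mem_edges] at hw
  exact ⟨w, hw⟩

/-- Two cycles, one contained in the other, have the same edges. -/
lemma cycle_edges_eq {G : SimpleGraph V} {c c' : V} {C : G.Walk c c} {C' : G.Walk c' c'}
    (hC : C.IsCycle) (hC' : C'.IsCycle) (hsub : ∀ f ∈ C'.edges, f ∈ C.edges) :
    {f | f ∈ C'.edges} = {f | f ∈ C.edges} := by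
  have tr : ∀ a b, s(a, b) ∈ C.edges → a ∈ C'.support → s(a, b) ∈ C'.edges :=
    fun a b hab ha => edge_transfer hC hC' ha (fun w hw => hsub _ hw) hab
  have hc' : c' ∈ C'.support := C'.start_mem_support
  obtain ⟨w, hw⟩ := exists_edge_of_mem hC' hc'
  have hc'C : c' ∈ C.support := C.fst_mem_support_of_mem_edges (hsub _ hw)
  ext f
  refine ⟨fun h => hsub f h, fun h => ?_⟩
  induction f with
  | _ a b =>
    refine tr a b h ?_
    exact closed_cycle C {v | v ∈ C'.support}
      (fun a b hab ha => C'.snd_mem_support_of_mem_edges (tr a b hab ha)) hc'C hc'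
      (C.fst_mem_support_of_mem_edges h)

lemma sep_transfer {G : SimpleGraph V} {c c' : V} {C : G.Walk c c} {C' : G.Walk c' c'}
    (hC : C.IsCycle) (hC' : C'.IsCycle) {x y : V} (hnotC : s(x, y) ∉ C.edges)
    (hsub : ∀ f ∈ C'.edges, f ∈ C.edges ∨ f = s(x, y)) (he : s(x, y) ∈ C'.edges)
    {p q r s : V} (hr : r ∈ C'.support) (hs : s ∈ C'.support)
    (h : Sep {f | f ∈ C'.edges} p q r s) : Sep {f | f ∈ C.edges} p q r s := by
  classical
  obtain ⟨f, hf, hrs⟩ := h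
  have tr : ∀ a b, s(a, b) ∈ C.edges → a ∈ C'.support → a ≠ x → a ≠ y →
      s(a, b) ∈ C'.edges := by
    intro a b hab ha hax hay
    refine edge_transfer hC hC' ha (fun w hw => ?_) hab
    rcases hsub _ hw with h | h
    · exact h
    · rw [Sym2.eq_iff] at h
      tauto
  have half : ∀ u v, s(u, v) ∈ C.edges → u ≠ p → u ≠ q → v ≠ p → v ≠ q → u ∈ C'.support →
      ((f u) ↔ (if v ∈ C'.support then f v else (if x ≠ p ∧ x ≠ q then f x else f y))) := by
    intro u v huv hup huq hvp hvq hu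
    by_cases hv : v ∈ C'.support
    · simp only [hv, if_true]
      by_cases h1 : u ≠ x ∧ u ≠ y
      · exact hf u v (tr u v huv hu h1.1 h1.2) hup huq hvp hvq
      · by_cases h2 : v ≠ x ∧ v ≠ y
        · have := tr v u (by rwa [Sym2.eq_swap]) hv h2.1 h2.2
          exact (hf v u this hvp hvq hup huq).symm
        · exfalso
          have huv' : u ≠ v := (C.adj_of_mem_edges huv).ne
          apply hnotC
          have : s(x, y) = s(u, v) := by
            rw [Sym2.eq_iff]
            by_cases a1 : u = x <;> by_cases a2 : v = x <;> grind
          rwa [this]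
    · simp only [hv, if_false]
      by_cases h1 : u ≠ x ∧ u ≠ y
      · exact absurd (C'.snd_mem_support_of_mem_edges (tr u v huv hu h1.1 h1.2)) hv
      · have h1' : u = x ∨ u = y := by tauto
        rcases h1' with rfl | rfl
        · simp [hup, huq]
        · by_cases hx : x ≠ p ∧ x ≠ q
          · rw [if_pos hx]
            exact (hf x u he hx.1 hx.2 hup huq).symm
          · rw [if_neg hx]
  refine ⟨fun v => if v ∈ C'.support then f v else (if x ≠ p ∧ x ≠ q then f x else f y), ?_, ?_⟩
  · intro u v huv hup huq hvp hvq
    by_cases hu : u ∈ C'.support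
    · have := half u v huv hup huq hvp hvq hu
      simpa only [hu, if_true] using this
    · by_cases hv : v ∈ C'.support
      · have := half v u (by
          have : s(u, v) ∈ C.edges := huv
          rwa [Sym2.eq_swap]) hvp hvq hup huq hv
        simp only [hv, if_true]
        exact this.symm
      · simp only [hu, hv, if_false]
  · simpa only [hr, hs, if_true] using hrs

/-! ### Alternating paths -/

lemma malt_reverse {G : SimpleGraph V} {M : Set (Sym2 V)} {u v : V} {P : G.Walk u v}
    (h : MAlternating G M P) : MAlternating G M P.reverse := by
  obtain ⟨S, hS, h⟩ := h
  refine ⟨S, by rwa [Set.pair_comm], ?_⟩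
  unfold WalkMConfOn at *
  simpa using h

lemma malt_left {G : SimpleGraph V} {M : Set (Sym2 V)} {u w v : V} {P : G.Walk u w}
    {Q : G.Walk w v} (hp : (P.append Q).IsPath) (h : MAlternating G M (P.append Q)) :
    MAlternating G M P := by
  obtain ⟨S, hS, h⟩ := h
  have meet : ∀ z, z ∈ P.support → z ∈ Q.support → z = w := by
    intro z h1 h2
    by_contra hz
    exact hp.ne_of_mem_support_of_append hz h1 h2 rfl
  let A : Set V := {x | x ∈ (P.append Q).support ∧ x ∉ S}
  refine ⟨{z | (z = u ∨ z = w) ∧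
    (z ∈ S ∨ ¬ ∃ e ∈ M, e ∈ P.edges ∧ (∀ y ∈ e, y ∈ A) ∧ z ∈ e)}, ?_, ?_⟩
  · rintro z ⟨hz, -⟩
    simpa using hz
  · rintro z ⟨hz, hzS⟩
    have hzS' : z ∉ S := by
      intro hS'
      apply hzS
      refine ⟨?_, Or.inl hS'⟩
      rcases hS hS' with rfl | hv
      · exact Or.inl rfl
      · right
        refine meet z hz ?_
        rw [Set.mem_singleton_iff] at hv
        rw [hv]
        exact Q.end_mem_support
    have hzA : z ∈ A := ⟨by simp [hz], hzS'⟩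
    obtain ⟨e, ⟨heM, heP, heA, hze⟩, huniq⟩ := h z hzA
    have heP' : e ∈ P.edges := by
      by_cases hzw : z = u ∨ z = w
      · have : ∃ e ∈ M, e ∈ P.edges ∧ (∀ y ∈ e, y ∈ A) ∧ z ∈ e := by
          by_contra hcon
          exact hzS ⟨hzw, Or.inr hcon⟩
        obtain ⟨e', h1, h2, h3, h4⟩ := this
        have := huniq e' ⟨h1, by simp [h2], h3, h4⟩
        rwa [← this]
      · rw [Walk.edges_append, List.mem_append] at heP
        rcases heP with h1 | h1
        · exact h1
        · exfalso
          exact hzw (Or.inr (meet z hz (Q.mem_support_of_mem_edges h1 hze)))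
    refine ⟨e, ⟨heM, heP', ?_, hze⟩, ?_⟩
    · intro y hy
      refine ⟨P.mem_support_of_mem_edges heP' hy, ?_⟩
      rintro ⟨-, h1 | h1⟩
      · exact (heA y hy).2 h1
      · exact h1 ⟨e, heM, heP', heA, hy⟩
    · rintro e' ⟨h1, h2, h3, h4⟩
      refine huniq e' ⟨h1, by simp [h2], ?_, h4⟩
      intro y hy
      obtain ⟨h5, h6⟩ := h3 y hy
      refine ⟨by simp [h5], ?_⟩
      intro hyS
      apply h6
      refine ⟨?_, Or.inl hyS⟩
      rcases hS hyS with rfl | hv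
      · exact Or.inl rfl
      · right
        refine meet y h5 ?_
        rw [Set.mem_singleton_iff] at hv
        rw [hv]
        exact Q.end_mem_support

lemma malt_right {G : SimpleGraph V} {M : Set (Sym2 V)} {u w v : V} {P : G.Walk u w}
    {Q : G.Walk w v} (hp : (P.append Q).IsPath) (h : MAlternating G M (P.append Q)) :
    MAlternating G M Q := by
  have h1 := malt_reverse h
  have h2 := hp.reverse
  rw [Walk.reverse_append] at h1 h2
  have := malt_reverse (malt_left h2 h1)
  rwa [Walk.reverse_reverse] at this

/-- A path whose ends are on `X` and are distinguished by `g` has a segment with the same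
property and no internal vertex in `X`. -/
lemma exists_segment {G : SimpleGraph V} {M : Set (Sym2 V)} (X : Set V) (g : V → Prop) (n : ℕ) :
    ∀ {u v : V} (P : G.Walk u v), P.length = n → P.IsPath → MAlternating G M P → u ∈ X → v ∈ X →
      ¬ (g u ↔ g v) →
      ∃ (a b : V) (Q : G.Walk a b), Q.IsPath ∧ MAlternating G M Q ∧ a ∈ X ∧ b ∈ X ∧
        ¬ (g a ↔ g b) ∧ (∀ z ∈ Q.support, z ∈ P.support) ∧ (∀ e ∈ Q.edges, e ∈ P.edges) ∧
        (∀ z ∈ Q.support, z ≠ a → z ≠ b → z ∉ X) := by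
  classical
  induction n using Nat.strong_induction_on with
  | _ n ih =>
    intro u v P hn hP hM hu hv hg
    by_cases hint : ∃ w ∈ P.support, w ≠ u ∧ w ≠ v ∧ w ∈ X
    · obtain ⟨w, hw, hwu, hwv, hwX⟩ := hint
      obtain ⟨P1, P2, rfl⟩ := Walk.mem_support_iff_exists_append.mp hw
      have l1 : P1.length ≠ 0 := fun h => hwu (Walk.eq_of_length_eq_zero h).symm
      have l2 : P2.length ≠ 0 := fun h => hwv (Walk.eq_of_length_eq_zero h)
      rw [Walk.length_append] at hn
      by_cases hguw : g u ↔ g w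
      · obtain ⟨a, b, Q, q1, q2, q3, q4, q5, q6, q7, q8⟩ := ih P2.length (by omega) P2 rfl
          hP.of_append_right (malt_right hP hM) hwX hv (by tauto)
        exact ⟨a, b, Q, q1, q2, q3, q4, q5, fun z hz => by simp [q6 z hz],
          fun e he => by simp [q7 e he], q8⟩
      · obtain ⟨a, b, Q, q1, q2, q3, q4, q5, q6, q7, q8⟩ := ih P1.length (by omega) P1 rfl
          hP.of_append_left (malt_left hP hM) hu hwX hguw
        exact ⟨a, b, Q, q1, q2, q3, q4, q5, fun z hz => by simp [q6 z hz],
          fun e he => by simp [q7 e he], q8⟩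
    · push Not at hint
      exact ⟨u, v, P, hP, hM, hu, hv, hg, fun _ h => h, fun _ h => h, hint⟩

/-- The ends of one path of a cross are not joined by an edge of the cycle. -/
lemma not_edge_of_cross [DecidableEq V] {G : SimpleGraph V} {c₀ : V} {C : G.Walk c₀ c₀}
    (hC : C.IsCycle) {a b c d : V}
    (hc : c ∈ C.support.tail) (hd : d ∈ C.support.tail)
    (hac : c ≠ a) (had : d ≠ a) (hbc : c ≠ b) (hbd : d ≠ b)
    (h : NCross (C.support.tail.idxOf a) (C.support.tail.idxOf b) (C.support.tail.idxOf c)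
      (C.support.tail.idxOf d)) : s(a, b) ∉ C.edges := by
  intro he
  have hp := cycle_edge_pos hC he
  simp only at hp
  have ic : _ ≠ _ := fun he => hac ((List.idxOf_inj hc).mp he)
  have ic' : _ ≠ _ := fun he => hbc ((List.idxOf_inj hc).mp he)
  have id : _ ≠ _ := fun he => had ((List.idxOf_inj hd).mp he)
  have id' : _ ≠ _ := fun he => hbd ((List.idxOf_inj hd).mp he)
  have lc := List.idxOf_lt_length_of_mem hc
  have ld := List.idxOf_lt_length_of_mem hd
  unfold NCross NBtw at h
  rcases hp with hp | hp | hp | hp <;> omega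

/-- extending a matching cross over `C' ⊆ C + e` to a matching cross
over `C` avoiding `e`. -/
theorem statement_0 {V : Type*} [Fintype V] [DecidableEq V] (B : SimpleGraph V)
    (hbip : IsBipartite B) (hbrace : IsBrace B)
    {c c' : V} (C : B.Walk c c) (C' : B.Walk c' c')
    (hC : C.IsCycle) (hC' : C'.IsCycle)
    (hCconf : ConformalCycle B C) (hC'conf : ConformalCycle B C')
    (hne : {f | f ∈ C'.edges} ≠ {f | f ∈ C.edges})
    (x y : V) (hxy : B.Adj x y) (hnotC : s(x, y) ∉ C.edges)
    (hxC : x ∈ C.support) (hyC : y ∈ C.support)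
    (hsub : ∀ f ∈ C'.edges, f ∈ C.edges ∨ f = s(x, y))
    (hcross : HasMatchingCross B C') :
    ∃ (M : Set (Sym2 V)) (s1 t1 s2 t2 : V) (P1 : B.Walk s1 t1) (P2 : B.Walk s2 t2),
      IsMatchingCrossOn B Set.univ C M P1 P2 ∧
      s(x, y) ∉ P1.edges ∧ s(x, y) ∉ P2.edges := by
  obtain ⟨M, s1, t1, s2, t2, L, R, hM, hnd, hcyc, hLp, hRp, hLa, hRa, hdisj, hLint, hRint⟩ := hcross
  -- the edge xy is on the second cycle
  have he : s(x, y) ∈ C'.edges := by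
    by_contra he
    refine hne (cycle_edges_eq hC hC' fun f hf => ?_)
    rcases hsub f hf with h | h
    · exact h
    · exact absurd (h ▸ hf) he
  have hx' : x ∈ C'.support := C'.fst_mem_support_of_mem_edges he
  have hy' : y ∈ C'.support := C'.snd_mem_support_of_mem_edges he
  have hCC : ∀ v, v ∈ C'.support → v ∈ C.support := by
    intro v hv
    obtain ⟨w, hw⟩ := exists_edge_of_mem hC' hv
    rcases hsub _ hw with h | h
    · exact C.fst_mem_support_of_mem_edges h
    · rw [Sym2.eq_iff] at h
      rcases h with ⟨rfl, -⟩ | ⟨rfl, -⟩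
      · exact hxC
      · exact hyC
  obtain ⟨⟨ms1, mt1, ms2, mt2⟩, hcr'⟩ := cross_of_cyc hC'.support_nodup hcyc
  simp only [List.nodup_cons, List.mem_cons, not_or, List.not_mem_nil, not_false_eq_true,
    List.nodup_nil, and_true] at hnd
  obtain ⟨⟨n12, n1t1, n1t2⟩, ⟨n2t1, n2t2⟩, nt⟩ := hnd
  -- the edge `xy` is on neither path
  have hadjL : s(s1, t1) ∉ C'.edges :=
    not_edge_of_cross hC' ms2 mt2 (Ne.symm n12) (Ne.symm n1t2) n2t1 (Ne.symm nt) hcr'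
  have injC' : ∀ {u v : V}, u ∈ C'.support.tail → u ≠ v →
      C'.support.tail.idxOf u ≠ C'.support.tail.idxOf v :=
    fun hu huv he => huv ((List.idxOf_inj hu).mp he)
  have hcr'' := ncross_symm hcr' (injC' ms1 n12) (injC' ms1 n1t2) (injC' mt1 (Ne.symm n2t1))
    (injC' mt1 nt)
  have hadjR : s(s2, t2) ∉ C'.edges :=
    not_edge_of_cross hC' ms1 mt1 n12 (Ne.symm n2t1) n1t2 nt hcr''
  have hxy' : x ≠ y := hxy.ne
  have noedge : ∀ {s t : V} (P : B.Walk s t), s(s, t) ∉ C'.edges →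
      (∀ z ∈ P.support, z ≠ s → z ≠ t → z ∉ C'.support) → s(x, y) ∉ P.edges := by
    intro s t P hst hint hmem
    have h1 := P.fst_mem_support_of_mem_edges hmem
    have h2 := P.snd_mem_support_of_mem_edges hmem
    have h3 : x = s ∨ x = t := by
      by_contra hcon
      push Not at hcon
      exact hint x h1 hcon.1 hcon.2 hx'
    have h4 : y = s ∨ y = t := by
      by_contra hcon
      push Not at hcon
      exact hint y h2 hcon.1 hcon.2 hy'
    apply hst
    have : s(s, t) = s(x, y) := by
      rw [Sym2.eq_iff]
      grind
    rwa [this]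
  have heL := noedge L hadjL hLint
  have heR := noedge R hadjR hRint
  -- transfer the crossing to the first cycle
  have memC : ∀ {v : V}, v ∈ C'.support.tail → v ∈ C.support.tail := fun hv =>
    (cycle_mem_tail hC).mpr (hCC _ ((cycle_mem_tail hC').mp hv))
  have hcr := cross_of_sep hC (memC ms2) (memC mt2) (Ne.symm n12) (Ne.symm n1t2) n2t1
    (Ne.symm nt) (sep_transfer hC hC' hnotC hsub he ((cycle_mem_tail hC').mp ms2)
      ((cycle_mem_tail hC').mp mt2) (sep_of_cross hC' ms1 mt1 hcr'))
  have inj : ∀ {u v : V}, u ∈ C.support.tail → u ≠ v →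
      C.support.tail.idxOf u ≠ C.support.tail.idxOf v :=
    fun hu huv he => huv ((List.idxOf_inj hu).mp he)
  have hcr2 := ncross_symm hcr (inj (memC ms1) n12) (inj (memC ms1) n1t2)
    (inj (memC mt1) (Ne.symm n2t1)) (inj (memC mt1) nt)
  -- choose a segment of `L`
  obtain ⟨a, b, P1, p1, p2, p3, p4, p5, p6, p7, p8⟩ := exists_segment
    {v | v ∈ C.support.tail} (fun v => NBtw (C.support.tail.idxOf s2) (C.support.tail.idxOf t2)
      (C.support.tail.idxOf v)) L.length L rfl hLp hLa (memC ms1) (memC mt1) hcr2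
  have hLR : ∀ {u v : V}, u ∈ P1.support → v ∈ R.support → u ≠ v := by
    rintro u v hu hv rfl
    exact hdisj u (p6 u hu) hv
  have ha := P1.start_mem_support
  have hb := P1.end_mem_support
  have hcr3 := ncross_symm (p := C.support.tail.idxOf s2) (q := C.support.tail.idxOf t2)
    (r := C.support.tail.idxOf a) (s := C.support.tail.idxOf b) p5
    (inj (memC ms2) (hLR ha R.start_mem_support).symm)
    (inj (memC ms2) (hLR hb R.start_mem_support).symm)
    (inj (memC mt2) (hLR ha R.end_mem_support).symm)
    (inj (memC mt2) (hLR hb R.end_mem_support).symm)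
  -- choose a segment of `R`
  obtain ⟨c₁, d₁, P2, r1, r2, r3, r4, r5, r6, r7, r8⟩ := exists_segment
    {v | v ∈ C.support.tail} (fun v => NBtw (C.support.tail.idxOf a) (C.support.tail.idxOf b)
      (C.support.tail.idxOf v)) R.length R rfl hRp hRa (memC ms2) (memC mt2) hcr3
  have hc₁ := r6 _ P2.start_mem_support
  have hd₁ := r6 _ P2.end_mem_support
  have hab : a ≠ b := by
    rintro rfl
    exact p5 Iff.rfl
  have hcd : c₁ ≠ d₁ := by
    rintro rfl
    exact r5 Iff.rfl
  refine ⟨M, a, b, c₁, d₁, P1, P2, ⟨hM, ?_, ?_, p1, r1, p2, r2, ?_, ?_, ?_⟩,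
    fun h => heL (p7 _ h), fun h => heR (r7 _ h)⟩
  · simp only [List.nodup_cons, List.mem_cons, not_or, List.not_mem_nil, not_false_eq_true,
      List.nodup_nil, and_true]
    exact ⟨⟨hLR ha hc₁, hab, hLR ha hd₁⟩, ⟨(hLR hb hc₁).symm, hcd⟩, hLR hb hd₁⟩
  · exact cyc_of_cross p3 p4 r3 r4 hab (hLR ha hc₁) (hLR ha hd₁) (hLR hb hc₁) (hLR hb hd₁) r5
  · exact fun z h1 h2 => hdisj z (p6 z h1) (r6 z h2)
  · exact fun z h1 h2 h3 h4 => p8 z h1 h2 h3 ((cycle_mem_tail hC).mpr h4)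
  · exact fun z h1 h2 h3 h4 => r8 z h1 h2 h3 ((cycle_mem_tail hC).mpr h4)

end Paper
end

section
/- Let B be a brace and C a cycle of length four in B (note that every 4-cycle in a brace is conformal). Then there is a conformal cross over C in B if and only if C is a subgraph of some conformal bisubdivision of K_{3,3} in B. -/
namespace Paper

open SimpleGraph

variable {V : Type*} {W : Type*}

/-! ### Helper lemmas -/

lemma partner_exists {G : SimpleGraph V} {N : Set (Sym2 V)} (h : IsPM G N) :
    ∃ n : V → V, (∀ v, s(v, n v) ∈ N) ∧ (∀ v, n (n v) = v) ∧ (∀ v, G.Adj v (n v)) ∧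
      (∀ v w, s(v, w) ∈ N → w = n v) := by
  obtain ⟨h1, -, h3⟩ := h
  have key : ∀ v, ∃ w, s(v, w) ∈ N := by
    intro v
    obtain ⟨e, ⟨he, hv⟩, -⟩ := h3 v (Set.mem_univ v)
    obtain ⟨w, rfl⟩ := Sym2.mem_iff_exists.1 hv
    exact ⟨w, he⟩
  choose n hn using key
  have huniq : ∀ v w, s(v, w) ∈ N → w = n v := by
    intro v w hw
    have := (h3 v (Set.mem_univ v)).unique ⟨hw, by simp⟩ ⟨hn v, by simp⟩
    exact Sym2.congr_right.1 this
  refine ⟨n, hn, ?_, ?_, huniq⟩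
  · intro v
    refine (huniq (n v) v ?_).symm
    rw [Sym2.eq_swap]; exact hn v
  · intro v
    exact h1 _ (hn v)

lemma matchesExactly_of_exists {G : SimpleGraph V} {N Es : Set (Sym2 V)} {A : Set V}
    (h : IsPM G N) (hA : ∀ v ∈ A, ∃ e ∈ N, e ∈ Es ∧ v ∈ e) : MatchesExactly N Es A := by
  intro v hv
  obtain ⟨e, he, hE, hve⟩ := hA v hv
  refine ⟨e, ⟨he, hE, hve⟩, ?_⟩
  rintro f ⟨hf, -, hvf⟩
  exact (h.2.2 v (Set.mem_univ v)).unique ⟨hf, hvf⟩ ⟨he, hve⟩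

lemma even_card_of_involution (S : Finset V) (n : V → V) (h1 : ∀ v ∈ S, n v ∈ S)
    (h2 : ∀ v, n v ≠ v) (h3 : ∀ v, n (n v) = v) : Even S.card := by
  have : ∑ _v ∈ S, (1 : ZMod 2) = 0 := by
    refine Finset.sum_involution (fun v _ => n v) ?_ ?_ ?_ ?_
    · intros; decide
    · intro v _ _; exact h2 v
    · intro v hv; exact h1 v hv
    · intro v hv; exact h3 v
  rw [Finset.sum_const, nsmul_eq_mul, mul_one, ZMod.natCast_eq_zero_iff] at this
  exact even_iff_two_dvd.2 this

lemma coloring_exists {G : SimpleGraph V} (h : IsBipartite G) : Nonempty (G.Coloring Bool) := by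
  classical
  obtain ⟨V1, V2, hd, hu, ha⟩ := h
  refine ⟨Coloring.mk (fun v => decide (v ∈ V1)) ?_⟩
  intro x y hxy
  have h1 := ha hxy
  have hy : y ∈ V2 ↔ y ∉ V1 := by
    constructor
    · intro h2 h1
      exact Set.disjoint_left.1 hd h1 h2
    · intro h1
      have : y ∈ V1 ∪ V2 := hu ▸ Set.mem_univ y
      exact this.resolve_left h1
  intro heq
  simp only [decide_eq_decide] at heq
  tauto

/-- The alternating walk obtained by iterating `n ∘ m`. -/
lemma alt_walk {G : SimpleGraph V} (n m : V → V) (hn : ∀ v, G.Adj v (n v))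
    (hm : ∀ v, G.Adj v (m v)) (H : Set V) (hH : ∀ v ∈ H, n v ∈ H)
    (a : V) (k : ℕ) :
    (∀ l, 0 < l → l ≤ k → (fun v => n (m v))^[l] a ∉ H) →
    ∃ w : G.Walk a (m ((fun v => n (m v))^[k] a)),
      (∀ e ∈ w.edges, ∃ v, e = s(v, n v) ∨ e = s(v, m v)) ∧
      ∀ v ∈ w.support, v ≠ a → v ≠ m ((fun v => n (m v))^[k] a) → v ∉ H := by
  induction k with
  | zero =>
    intro _
    refine ⟨Walk.cons (hm a) Walk.nil, ?_, ?_⟩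
    · intro e he
      simp at he
      exact ⟨a, Or.inr he⟩
    · intro v hv h1 h2
      simp at hv h2
      tauto
  | succ k ih =>
    intro h
    have ih' := ih (fun l h0 hl => h l h0 (by omega))
    have hk := h (k + 1) (by omega) le_rfl
    rw [Function.iterate_succ_apply'] at hk ⊢
    generalize m ((fun v => n (m v))^[k] a) = b at ih' hk ⊢
    obtain ⟨w, hw1, hw2⟩ := ih'
    have hbH : b ∉ H := fun hh => hk (hH _ hh)
    refine ⟨(w.concat (hn b)).concat (hm (n b)), ?_, ?_⟩
    · intro e he
      simp only [Walk.edges_concat, List.concat_eq_append, List.mem_append, List.mem_singleton] at he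
      rcases he with (he | he) | he
      · exact hw1 e he
      · exact ⟨b, Or.inl he⟩
      · exact ⟨n b, Or.inr he⟩
    · intro v hv h1 h2
      simp only [Walk.support_concat, List.mem_append,
        List.mem_singleton] at hv
      rcases hv with (hv | hv) | hv
      · by_cases hvb : v = b
        · rw [hvb]; exact hbH
        · exact hw2 v hv h1 hvb
      · rw [hv]; exact hk
      · exact absurd hv h2

lemma seq_select (g : V → V) (S1 S2 : Set V) (hd : ∀ x, x ∈ S1 → x ∉ S2) (T : Set V)
    (hT : ∀ v ∈ T, g v ∈ T) (k : ℕ) :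
    ∀ z ∈ S2, z ∈ T → g^[k] z ∈ S1 → ∃ z' ∈ S2, z' ∈ T ∧ ∃ j, g^[j + 1] z' ∈ S1 ∧
      ∀ l, 0 < l → l ≤ j → g^[l] z' ∉ S1 ∪ S2 := by
  induction k using Nat.strong_induction_on with
  | _ k ih =>
    intro z hz hzT hk
    by_cases hex : ∃ l, 0 < l ∧ l < k ∧ g^[l] z ∈ S1 ∪ S2
    · obtain ⟨l, hl0, hlk, hl | hl⟩ := hex
      · exact ih l hlk z hz hzT hl
      · refine ih (k - l) (by omega) _ hl ?_ ?_
        · clear hl hlk hl0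
          induction l with
          | zero => exact hzT
          | succ l ihl => rw [Function.iterate_succ_apply']; exact hT _ ihl
        · rw [← Function.iterate_add_apply, Nat.sub_add_cancel hlk.le]; exact hk
    · push Not at hex
      obtain _ | k := k
      · exact absurd hz (hd _ hk)
      · exact ⟨z, hz, hzT, k, hk, fun l h0 hl => hex l h0 (by omega)⟩

lemma find_Q [Finite V] {G : SimpleGraph V} (col : G.Coloring Bool) (n m : V → V)
    (hn : ∀ v, G.Adj v (n v)) (hm : ∀ v, G.Adj v (m v)) (hnn : ∀ v, n (n v) = v)
    (hmm : ∀ v, m (m v) = v) (S1 S2 : Set V) (hd : ∀ x, x ∈ S1 → x ∉ S2) (a1 b1 a2 b2 : V)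
    (ha1 : a1 ∈ S1) (ha2 : a2 ∈ S1) (hb1 : b1 ∈ S2) (hb2 : b2 ∈ S2) (hcol : col a2 = col a1)
    (hb12 : b1 ≠ b2)
    (hna1 : n a1 = b1) (hma1 : m a1 = b1) (hma2 : m a2 = b2)
    (hS1 : ∀ v ∈ S1, v ≠ a1 → n v ∈ S1) (hS2 : ∀ v ∈ S2, v ≠ b1 → n v ∈ S2) :
    ∃ z ∈ S2, ∃ x ∈ S1, col z = col a1 ∧ col x ≠ col a1 ∧ ∃ w : G.Walk z x,
      (∀ e ∈ w.edges, ∃ v, e = s(v, n v) ∨ e = s(v, m v)) ∧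
      ∀ v ∈ w.support, v ≠ z → v ≠ x → v ∉ S1 ∪ S2 := by
  set g : V → V := fun v => n (m v) with hg
  have ginj : Function.Injective g := by
    intro x y hxy
    have : m x = m y := by
      have := congrArg n hxy
      simpa [hg, hnn] using this
    have := congrArg m this
    simpa [hmm] using this
  have ga1 : g a1 = a1 := by simp only [hg, hma1, ← hna1, hnn]
  have hcolg : ∀ v ∈ {v | col v = col a1}, g v ∈ {v | col v = col a1} := by
    intro v hv
    have h1 := col.valid (hm v)
    have h2 := col.valid (hn (m v))
    simp only [Set.mem_ofPred_eq, hg] at hv ⊢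
    rw [← hv]
    revert h1 h2
    cases col v <;> cases col (m v) <;> cases col (n (m v)) <;> simp
  have ga2 : g a2 = n b2 := by simp only [hg, hma2]
  have hz0 : n b2 ∈ S2 := hS2 b2 hb2 hb12.symm
  obtain ⟨p, hp0, hp⟩ : ∃ p > 0, g^[p] (n b2) = n b2 := by
    have := ginj.mem_periodicPts (n b2)
    exact this
  obtain ⟨p, rfl⟩ : ∃ q, p = q + 1 := ⟨p - 1, by omega⟩
  have hpa : g^[p] (n b2) = a2 := by
    apply ginj
    rw [ga2, ← Function.iterate_succ_apply' g, hp]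
  obtain ⟨z, hz, hzT, j, hj, hjl⟩ := seq_select g S1 S2 hd {v | col v = col a1} hcolg p (n b2) hz0
    (ga2 ▸ hcolg a2 hcol) (hpa ▸ ha2)
  obtain ⟨w, hw1, hw2⟩ := alt_walk n m hn hm (S1 ∪ S2) (by
    rintro v (hv | hv)
    · by_cases h : v = a1
      · right; rw [h, hna1]; exact hb1
      · left; exact hS1 v hv h
    · by_cases h : v = b1
      · left; rw [h, ← hna1, hnn]; exact ha1
      · right; exact hS2 v hv h) z j hjl
  have hgl : ∀ l, g^[l] z ∈ {v | col v = col a1} ∧ g^[l] z ≠ a1 := by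
    intro l
    induction l with
    | zero => exact ⟨hzT, fun h => hd a1 ha1 (h ▸ hz)⟩
    | succ l ih =>
      rw [Function.iterate_succ_apply']
      exact ⟨hcolg _ ih.1, fun h => ih.2 (ginj (h.trans ga1.symm))⟩
  refine ⟨z, hz, m (g^[j] z), ?_, hzT, ?_, w, hw1, hw2⟩
  · have := hS1 _ hj (hgl _).2
    rw [Function.iterate_succ_apply'] at this
    simpa only [hg, hnn] using this
  · have := col.valid (hm (g^[j] z))
    have h2 := (hgl j).1
    simp only [Set.mem_ofPred_eq] at h2
    rw [h2] at this
    exact this.symm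

/-- Build a bisubdivision of `K33` from nine paths. -/
def mkK33 {G : SimpleGraph V} (u w : Fin 3 → V) (l : ∀ i j, G.Walk (u i) (w j))
    (hu : Function.Injective u) (hw : Function.Injective w) (huw : ∀ i j, u i ≠ w j)
    (hpath : ∀ i j, (l i j).IsPath) (hodd : ∀ i j, Odd (l i j).length)
    (own : V → Fin 3 × Fin 3)
    (hown : ∀ i j, ∀ v ∈ (l i j).support, (v = u i ∨ v = w j) ∨
      (own v = (i, j) ∧ (∀ k, v ≠ u k) ∧ ∀ k, v ≠ w k)) : Bisubdivision K33 G where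
  bv := Sum.elim u w
  bv_inj := by
    rintro (i | i) (j | j) h
    · exact congrArg _ (hu h)
    · exact absurd h (huw i j)
    · exact absurd h.symm (huw j i)
    · exact congrArg _ (hw h)
  link := fun x y => match x, y with
    | Sum.inl i, Sum.inr j => fun _ => l i j
    | Sum.inr j, Sum.inl i => fun _ => (l i j).reverse
    | Sum.inl _, Sum.inl _ => fun h => absurd h (by simp)
    | Sum.inr _, Sum.inr _ => fun h => absurd h (by simp)
  link_isPath := by
    rintro (i | i) (j | j) h
    · simp at h
    · exact hpath i j
    · exact (hpath j i).reverse
    · simp at h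
  link_odd := by
    rintro (i | i) (j | j) h
    · simp at h
    · exact hodd i j
    · simpa using hodd j i
    · simp at h
  link_symm := by
    rintro (i | i) (j | j) h
    · simp at h
    · rfl
    · simp
    · simp at h
  link_branch := by
    have key : ∀ i j, ∀ z : Fin 3 ⊕ Fin 3, Sum.elim u w z ∈ (l i j).support →
        z = Sum.inl i ∨ z = Sum.inr j := by
      rintro i j (k | k) hk
      · rcases hown i j _ hk with (h | h) | h
        · left; exact congrArg _ (hu h)
        · exact absurd h (huw k j)
        · exact absurd rfl (h.2.1 k)
      · rcases hown i j _ hk with (h | h) | h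
        · exact absurd h.symm (huw i k)
        · right; exact congrArg _ (hw h)
        · exact absurd rfl (h.2.2 k)
    rintro (i | i) (j | j) h z hz
    · simp at h
    · exact key i j z hz
    · exact (key j i z (by simpa using hz)).symm
    · simp at h
  link_meet := by
    have key : ∀ i j i' j', (i, j) ≠ (i', j') → ∀ v, v ∈ (l i j).support → v ∈ (l i' j').support →
        (v = u i ∨ v = w j) ∧ (v = u i' ∨ v = w j') := by
      intro i j i' j' hne v h1 h2
      rcases hown i j v h1 with h1 | h1 <;> rcases hown i' j' v h2 with h2 | h2
      · exact ⟨h1, h2⟩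
      · rcases h1 with h1 | h1
        · exact absurd h1 (h2.2.1 _)
        · exact absurd h1 (h2.2.2 _)
      · rcases h2 with h2 | h2
        · exact absurd h2 (h1.2.1 _)
        · exact absurd h2 (h1.2.2 _)
      · exact absurd (h1.1.symm.trans h2.1) hne
    rintro (i | i) (j | j) (i' | i') (j' | j') h h' hne v hv hv' <;>
      first
      | (exfalso; simp at h; done)
      | (exfalso; simp at h'; done)
      | skip
    · exact key i j i' j' (by rintro h; simp at h hne; tauto) v hv hv'
    · have := key i j j' i' (by rintro h; simp at h hne; tauto) v hv (by simpa using hv')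
      exact ⟨this.1, this.2.symm⟩
    · have := key j i i' j' (by rintro h; simp at h hne; tauto) v (by simpa using hv) hv'
      exact ⟨this.1.symm, this.2⟩
    · have := key j i j' i' (by rintro h; simp at h hne; tauto) v (by simpa using hv)
        (by simpa using hv')
      exact ⟨this.1.symm, this.2.symm⟩

lemma mkK33_edgeSet {G : SimpleGraph V} (u w : Fin 3 → V) (l : ∀ i j, G.Walk (u i) (w j))
    (hu hw huw hpath hodd own hown) (e : Sym2 V) :
    e ∈ (mkK33 u w l hu hw huw hpath hodd own hown).edgeSet ↔ ∃ i j, e ∈ (l i j).edges := by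
  constructor
  · rintro ⟨i | i, j | j, h, he⟩
    · simp at h
    · exact ⟨i, j, he⟩
    · exact ⟨j, i, by simpa [mkK33] using he⟩
    · simp at h
  · rintro ⟨i, j, he⟩
    exact ⟨Sum.inl i, Sum.inr j, by simp, he⟩

lemma mkK33_verts {G : SimpleGraph V} (u w : Fin 3 → V) (l : ∀ i j, G.Walk (u i) (w j))
    (hu hw huw hpath hodd own hown) (v : V) :
    v ∈ (mkK33 u w l hu hw huw hpath hodd own hown).verts ↔ ∃ i j, v ∈ (l i j).support := by
  constructor
  · rintro ⟨i | i, j | j, h, he⟩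
    · simp at h
    · exact ⟨i, j, he⟩
    · exact ⟨j, i, by simpa [mkK33] using he⟩
    · simp at h
  · rintro ⟨i, j, he⟩
    exact ⟨Sum.inl i, Sum.inr j, by simp, he⟩

/-- In a path, an internal vertex lies on two distinct edges of the path. -/
lemma two_edges {G : SimpleGraph V} {u v : V} (p : G.Walk u v) (hp : p.IsPath) (x : V)
    (hx : x ∈ p.support) (hxu : x ≠ u) (hxv : x ≠ v) :
    ∃ y z, y ≠ z ∧ s(x, y) ∈ p.edges ∧ s(x, z) ∈ p.edges := by
  obtain ⟨i, rfl, hi⟩ := Walk.mem_support_iff_exists_getVert.1 hx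
  have hi0 : i ≠ 0 := by rintro rfl; simp at hxu
  have hil : i ≠ p.length := by rintro rfl; simp at hxv
  refine ⟨p.getVert (i - 1), p.getVert (i + 1), ?_, ?_, ?_⟩
  · intro h
    have := hp.getVert_injOn (by simp; omega) (by simp; omega) h
    omega
  · rw [Walk.mk_mem_edges_iff_exists]
    refine ⟨i - 1, by omega, ?_⟩
    rw [Nat.sub_add_cancel (by omega), Sym2.eq_swap]
  · rw [Walk.mk_mem_edges_iff_exists]
    exact ⟨i, by omega, rfl⟩

/-- On a path, the part before `x` and the part after `x` meet only in `x`. -/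
lemma take_drop_meet [DecidableEq V] {G : SimpleGraph V} {u v x y : V} (p : G.Walk u v)
    (hp : p.IsPath) (hx : x ∈ p.support) (h1 : y ∈ (p.takeUntil x hx).support)
    (h2 : y ∈ (p.dropUntil x hx).support) : y = x := by
  have h := hp
  rw [← p.take_spec hx, Walk.isPath_def, Walk.support_append, List.nodup_append] at h
  by_contra hne
  have h3 : y ∈ (p.dropUntil x hx).support.tail := by
    rw [Walk.mem_support_iff] at h2
    exact h2.resolve_left hne
  exact h.2.2 y h1 y h3 rfl

lemma single_isPath {G : SimpleGraph V} {p q : V} (h : G.Adj p q) :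
    (Walk.cons h Walk.nil).IsPath := by
  simpa using h.ne

lemma single_edge {G : SimpleGraph V} {p q : V} (h : G.Adj p q) :
    s(p, q) ∈ (Walk.cons h Walk.nil).edges := by
  simp

lemma single_support {G : SimpleGraph V} {p q v : V} (h : G.Adj p q)
    (hv : v ∈ (Walk.cons h Walk.nil).support) : v = p ∨ v = q := by
  simpa using hv

set_option maxHeartbeats 1000000 in
lemma core [Finite V] [DecidableEq V] {B : SimpleGraph V} (col : B.Coloring Bool)
    {N M : Set (Sym2 V)} (hN : IsPM B N) (hM : IsPM B M) {a1 a2 b1 b2 : V}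
    (P1 : B.Walk a1 a2) (P2 : B.Walk b1 b2) (hP1 : P1.IsPath) (hP2 : P2.IsPath)
    (hd : ∀ x, x ∈ P1.support → x ∉ P2.support)
    (ha : a1 ≠ a2) (hb : b1 ≠ b2)
    (h11 : B.Adj a1 b1) (h12 : B.Adj a1 b2) (h21 : B.Adj a2 b1) (h22 : B.Adj a2 b2)
    (hN1 : s(a1, b1) ∈ N) (hM1 : s(a1, b1) ∈ M) (hM2 : s(a2, b2) ∈ M)
    (hNP1 : ∀ v ∈ P1.support, v ≠ a1 → ∃ e ∈ N, e ∈ P1.edges ∧ v ∈ e)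
    (hNP2 : ∀ v ∈ P2.support, v ≠ b1 → ∃ e ∈ N, e ∈ P2.edges ∧ v ∈ e) :
    ∃ L : Bisubdivision K33 B, L.ConformalOn Set.univ ∧ s(a1, b1) ∈ L.edgeSet ∧
      s(a1, b2) ∈ L.edgeSet ∧ s(a2, b1) ∈ L.edgeSet ∧ s(a2, b2) ∈ L.edgeSet := by
  obtain ⟨n, hn1, hnn, hnadj, hnu⟩ := partner_exists hN
  obtain ⟨m, hm1, hmm, hmadj, hmu⟩ := partner_exists hM
  have hcolb : ∀ {x y z : V}, B.Adj x y → B.Adj y z → col x = col z := by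
    intro x y z h1 h2
    have h1 := col.valid h1
    have h2 := col.valid h2
    revert h1 h2
    cases col x <;> cases col y <;> cases col z <;> simp
  have hca : col a2 = col a1 := hcolb h21 h11.symm
  have hcb1 : col b1 ≠ col a1 := (col.valid h11).symm
  have hcb2 : col b2 ≠ col a1 := (col.valid h12).symm
  have hstep : ∀ {u v : V} (P : B.Walk u v), (∀ y ∈ P.support, y ≠ u → ∃ e ∈ N, e ∈ P.edges ∧ y ∈ e) →
      ∀ y ∈ P.support, y ≠ u → n y ∈ P.support := by
    intro u v P h y hy hyu
    obtain ⟨e, he, heP, hye⟩ := h y hy hyu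
    obtain ⟨w, rfl⟩ := Sym2.mem_iff_exists.1 hye
    rw [← hnu y w he]
    exact Walk.snd_mem_support_of_mem_edges P heP
  obtain ⟨z, hz, x, hx, hcz, hcx, Q0, hQ0e, hQ0d⟩ := find_Q col n m hnadj hmadj hnn hmm
    {v | v ∈ P1.support} {v | v ∈ P2.support} hd a1 b1 a2 b2 (by simp) (by simp) (by simp) (by simp)
    hca hb (hnu _ _ hN1).symm (hmu _ _ hM1).symm (hmu _ _ hM2).symm
    (hstep P1 hNP1) (hstep P2 hNP2)
  simp only [Set.mem_ofPred_eq] at hz hx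
  obtain ⟨Q, hQ, hQe, hQd⟩ : ∃ Q : B.Walk z x, Q.IsPath ∧
      (∀ e ∈ Q.edges, ∃ v, e = s(v, n v) ∨ e = s(v, m v)) ∧
      ∀ v ∈ Q.support, v ≠ z → v ≠ x → v ∉ P1.support ∧ v ∉ P2.support := by
    refine ⟨Q0.bypass, Q0.bypass_isPath, fun e he => hQ0e e (Q0.edges_bypass_subset_edges he), ?_⟩
    intro v hv h1 h2
    have := hQ0d v (Q0.support_bypass_subset_support hv) h1 h2
    simpa [not_or] using this
  have hQn : ∀ v ∈ Q.support, v ≠ z → v ≠ x → s(v, n v) ∈ Q.edges := by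
    intro v hv h1 h2
    obtain ⟨y, y', hyy, hy, hy'⟩ := two_edges Q hQ v hv h1 h2
    have key : ∀ y, s(v, y) ∈ Q.edges → y = n v ∨ y = m v := by
      intro y hy
      obtain ⟨t, ht | ht⟩ := hQe _ hy
      · left; exact hnu _ _ (ht ▸ hn1 t)
      · right; exact hmu _ _ (ht ▸ hm1 t)
    rcases key y hy with h | h
    · rw [← h]; exact hy
    · rcases key y' hy' with h' | h'
      · rw [← h']; exact hy'
      · exact absurd (h.trans h'.symm) hyy
  -- distinctness
  have hxa1 : x ≠ a1 := fun h => hcx (by rw [h])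
  have hxa2 : x ≠ a2 := fun h => hcx (by rw [h, hca])
  have hzb1 : z ≠ b1 := fun h => hcb1 (by rw [← h, hcz])
  have hzb2 : z ≠ b2 := fun h => hcb2 (by rw [← h, hcz])
  have ha1S : a1 ∈ P1.support := by simp
  have ha2S : a2 ∈ P1.support := by simp
  have hb1S : b1 ∈ P2.support := by simp
  have hb2S : b2 ∈ P2.support := by simp
  have hne : ∀ {p q : V}, p ∈ P1.support → q ∈ P2.support → p ≠ q := by
    rintro p q hp hq rfl
    exact hd p hp hq
  have hoddcol : ∀ {p q : V} (R : B.Walk p q), col p = col a1 → col q ≠ col a1 → Odd R.length := by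
    intro p q R h1 h2
    rw [col.odd_length_iff_not_congr, h1]
    revert h2
    cases col q <;> cases col a1 <;> simp
  let u : Fin 3 → V := ![a1, a2, z]
  let w : Fin 3 → V := ![b1, b2, x]
  let l : ∀ i j, B.Walk (u i) (w j) := fun i j => match i, j with
    | 0, 0 => Walk.cons h11 Walk.nil
    | 0, 1 => Walk.cons h12 Walk.nil
    | 0, 2 => P1.takeUntil x hx
    | 1, 0 => Walk.cons h21 Walk.nil
    | 1, 1 => Walk.cons h22 Walk.nil
    | 1, 2 => (P1.dropUntil x hx).reverse
    | 2, 0 => (P2.takeUntil z hz).reverse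
    | 2, 1 => P2.dropUntil z hz
    | 2, 2 => Q
  have hcu : ∀ i, col (u i) = col a1 := by
    intro i; fin_cases i
    · rfl
    · exact hca
    · exact hcz
  have hcw : ∀ i, col (w i) ≠ col a1 := by
    intro i; fin_cases i
    · exact hcb1
    · exact hcb2
    · exact hcx
  have hu : Function.Injective u := by
    have h1 := hne ha1S hz
    have h2 := hne ha2S hz
    intro i j hij
    fin_cases i <;> fin_cases j <;> first | rfl | (exfalso; simp [u] at hij; tauto)
  have hw : Function.Injective w := by
    have h1 := hne hx hb1S
    have h2 := hne hx hb2S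
    intro i j hij
    fin_cases i <;> fin_cases j <;> first | rfl | (exfalso; simp [w] at hij; tauto)
  have huw : ∀ i j, u i ≠ w j := fun i j h => hcw j (by rw [← h, hcu])
  have hpath : ∀ i j, (l i j).IsPath := by
    intro i j
    fin_cases i <;> fin_cases j
    · exact single_isPath h11
    · exact single_isPath h12
    · exact hP1.takeUntil hx
    · exact single_isPath h21
    · exact single_isPath h22
    · exact (hP1.dropUntil hx).reverse
    · exact (hP2.takeUntil hz).reverse
    · exact hP2.dropUntil hz
    · exact hQ
  have hodd : ∀ i j, Odd (l i j).length := fun i j => hoddcol _ (hcu i) (hcw j)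
  let own : V → Fin 3 × Fin 3 := fun v =>
    if v ∈ (P1.takeUntil x hx).support then (0, 2)
    else if v ∈ P1.support then (1, 2)
    else if v ∈ (P2.takeUntil z hz).support then (2, 0)
    else if v ∈ P2.support then (2, 1)
    else (2, 2)
  have hbr : ∀ v, v ≠ a1 → v ≠ a2 → v ≠ z → v ≠ b1 → v ≠ b2 → v ≠ x →
      (∀ k, v ≠ u k) ∧ ∀ k, v ≠ w k := by
    intro v h1 h2 h3 h4 h5 h6
    constructor <;> intro k <;> fin_cases k <;> assumption
  have hT1 : ∀ v, v ∈ (P1.takeUntil x hx).support → v ∈ P1.support :=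
    fun v h => P1.support_takeUntil_subset_support hx h
  have hD1 : ∀ v, v ∈ (P1.dropUntil x hx).support → v ∈ P1.support :=
    fun v h => P1.support_dropUntil_subset_support hx h
  have hT2 : ∀ v, v ∈ (P2.takeUntil z hz).support → v ∈ P2.support :=
    fun v h => P2.support_takeUntil_subset_support hz h
  have hD2 : ∀ v, v ∈ (P2.dropUntil z hz).support → v ∈ P2.support :=
    fun v h => P2.support_dropUntil_subset_support hz h
  have hown : ∀ i j, ∀ v ∈ (l i j).support, (v = u i ∨ v = w j) ∨
      (own v = (i, j) ∧ (∀ k, v ≠ u k) ∧ ∀ k, v ≠ w k) := by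
    intro i j v hv
    by_cases hcase : v = u i ∨ v = w j
    · exact Or.inl hcase
    right
    push Not at hcase
    obtain ⟨hvu, hvw⟩ := hcase
    fin_cases i <;> fin_cases j
    · exact absurd (single_support h11 hv) (not_or.2 ⟨hvu, hvw⟩)
    · exact absurd (single_support h12 hv) (not_or.2 ⟨hvu, hvw⟩)
    · change v ∈ (P1.takeUntil x hx).support at hv
      change v ≠ a1 at hvu
      change v ≠ x at hvw
      refine ⟨by simp [own, hv], hbr v hvu ?_ (hne (hT1 v hv) hz) (hne (hT1 v hv) hb1S)
        (hne (hT1 v hv) hb2S) hvw⟩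
      rintro rfl
      exact hvw (take_drop_meet P1 hP1 hx hv (by simp))
    · exact absurd (single_support h21 hv) (not_or.2 ⟨hvu, hvw⟩)
    · exact absurd (single_support h22 hv) (not_or.2 ⟨hvu, hvw⟩)
    · change v ∈ (P1.dropUntil x hx).reverse.support at hv
      rw [Walk.support_reverse, List.mem_reverse] at hv
      change v ≠ a2 at hvu
      change v ≠ x at hvw
      have hvT : v ∉ (P1.takeUntil x hx).support :=
        fun h => hvw (take_drop_meet P1 hP1 hx h hv)
      refine ⟨by simp [own, hvT, hD1 v hv], hbr v ?_ hvu (hne (hD1 v hv) hz) (hne (hD1 v hv) hb1S)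
        (hne (hD1 v hv) hb2S) hvw⟩
      rintro rfl
      exact hvT (by simp)
    · change v ∈ (P2.takeUntil z hz).reverse.support at hv
      rw [Walk.support_reverse, List.mem_reverse] at hv
      change v ≠ z at hvu
      change v ≠ b1 at hvw
      have hv1 : v ∉ P1.support := fun h => hd v h (hT2 v hv)
      have hvT : v ∉ (P1.takeUntil x hx).support := fun h => hv1 (hT1 v h)
      refine ⟨by simp [own, hvT, hv1, hv], hbr v (hne ha1S (hT2 v hv)).symm
        (hne ha2S (hT2 v hv)).symm hvu hvw ?_ (hne hx (hT2 v hv)).symm⟩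
      rintro rfl
      exact hvu (take_drop_meet P2 hP2 hz hv (by simp))
    · change v ∈ (P2.dropUntil z hz).support at hv
      change v ≠ z at hvu
      change v ≠ b2 at hvw
      have hv1 : v ∉ P1.support := fun h => hd v h (hD2 v hv)
      have hvT : v ∉ (P1.takeUntil x hx).support := fun h => hv1 (hT1 v h)
      have hvT2 : v ∉ (P2.takeUntil z hz).support :=
        fun h => hvu (take_drop_meet P2 hP2 hz h hv)
      refine ⟨by simp [own, hvT, hv1, hvT2, hD2 v hv], hbr v (hne ha1S (hD2 v hv)).symm
        (hne ha2S (hD2 v hv)).symm hvu ?_ hvw (hne hx (hD2 v hv)).symm⟩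
      rintro rfl
      exact hvT2 (by simp)
    · change v ∈ Q.support at hv
      change v ≠ z at hvu
      change v ≠ x at hvw
      obtain ⟨hv1, hv2⟩ := hQd v hv hvu hvw
      have hvT : v ∉ (P1.takeUntil x hx).support := fun h => hv1 (hT1 v h)
      have hvT2 : v ∉ (P2.takeUntil z hz).support := fun h => hv2 (hT2 v h)
      refine ⟨by simp [own, hvT, hv1, hvT2, hv2], hbr v ?_ ?_ hvu ?_ ?_ hvw⟩ <;>
      · rintro rfl
        contradiction
  have hedge := mkK33_edgeSet u w l hu hw huw hpath hodd own hown
  have hvert := mkK33_verts u w l hu hw huw hpath hodd own hown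
  generalize mkK33 u w l hu hw huw hpath hodd own hown = L at hedge hvert
  have e11 : s(a1, b1) ∈ L.edgeSet := (hedge _).2 ⟨0, 0, single_edge h11⟩
  have e12 : s(a1, b2) ∈ L.edgeSet := (hedge _).2 ⟨0, 1, single_edge h12⟩
  have e21 : s(a2, b1) ∈ L.edgeSet := (hedge _).2 ⟨1, 0, single_edge h21⟩
  have e22 : s(a2, b2) ∈ L.edgeSet := (hedge _).2 ⟨1, 1, single_edge h22⟩
  have eP1 : ∀ e ∈ P1.edges, e ∈ L.edgeSet := by
    intro e he
    rw [← P1.take_spec hx, Walk.edges_append, List.mem_append] at he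
    rcases he with he | he
    · exact (hedge _).2 ⟨0, 2, he⟩
    · refine (hedge _).2 ⟨1, 2, ?_⟩
      change e ∈ (P1.dropUntil x hx).reverse.edges
      simpa using he
  have eP2 : ∀ e ∈ P2.edges, e ∈ L.edgeSet := by
    intro e he
    rw [← P2.take_spec hz, Walk.edges_append, List.mem_append] at he
    rcases he with he | he
    · refine (hedge _).2 ⟨2, 0, ?_⟩
      change e ∈ (P2.takeUntil z hz).reverse.edges
      simpa using he
    · exact (hedge _).2 ⟨2, 1, he⟩
  have eQ : ∀ e ∈ Q.edges, e ∈ L.edgeSet := fun e he => (hedge _).2 ⟨2, 2, he⟩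
  refine ⟨L, ⟨N, hN, matchesExactly_of_exists hN ?_⟩, e11, e12, e21, e22⟩
  have c1 : ∀ v ∈ P1.support, ∃ e ∈ N, e ∈ L.edgeSet ∧ v ∈ e := by
    intro v hv
    by_cases h : v = a1
    · exact ⟨_, hN1, e11, by simp [h]⟩
    · obtain ⟨e, he, he2, hve⟩ := hNP1 v hv h
      exact ⟨e, he, eP1 e he2, hve⟩
  have c2 : ∀ v ∈ P2.support, ∃ e ∈ N, e ∈ L.edgeSet ∧ v ∈ e := by
    intro v hv
    by_cases h : v = b1
    · exact ⟨_, hN1, e11, by simp [h]⟩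
    · obtain ⟨e, he, he2, hve⟩ := hNP2 v hv h
      exact ⟨e, he, eP2 e he2, hve⟩
  have c3 : ∀ v ∈ Q.support, ∃ e ∈ N, e ∈ L.edgeSet ∧ v ∈ e := by
    intro v hv
    by_cases h1 : v = z
    · exact c2 v (h1 ▸ hz)
    by_cases h2 : v = x
    · exact c1 v (h2 ▸ hx)
    exact ⟨s(v, n v), hn1 v, eQ _ (hQn v hv h1 h2), by simp⟩
  intro v hv
  obtain ⟨i, j, hv⟩ := (hvert v).1 hv
  fin_cases i <;> fin_cases j
  · rcases single_support h11 hv with rfl | rfl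
    · exact c1 _ ha1S
    · exact c2 _ hb1S
  · rcases single_support h12 hv with rfl | rfl
    · exact c1 _ ha1S
    · exact c2 _ hb2S
  · exact c1 v (hT1 v hv)
  · rcases single_support h21 hv with rfl | rfl
    · exact c1 _ ha2S
    · exact c2 _ hb1S
  · rcases single_support h22 hv with rfl | rfl
    · exact c1 _ ha2S
    · exact c2 _ hb2S
  · change v ∈ (P1.dropUntil x hx).reverse.support at hv
    rw [Walk.support_reverse, List.mem_reverse] at hv
    exact c1 v (hD1 v hv)
  · change v ∈ (P2.takeUntil z hz).reverse.support at hv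
    rw [Walk.support_reverse, List.mem_reverse] at hv
    exact c2 v (hT2 v hv)
  · exact c2 v (hD2 v hv)
  · exact c3 v hv

lemma c4_cases {G : SimpleGraph V} {c : V} (C : G.Walk c c) (hC : C.IsCycle) (hlen : C.length = 4) :
    ∃ c1 c2 c3, [c, c1, c2, c3].Nodup ∧ C.support = [c, c1, c2, c3, c] ∧
      C.edges = [s(c, c1), s(c1, c2), s(c2, c3), s(c3, c)] := by
  match C, hC, hlen with
  | .cons (v := c1) h0 (.cons (v := c2) h1 (.cons (v := c3) h2 (.cons h3 .nil))), hC, _ =>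
    refine ⟨c1, c2, c3, ?_, by simp, by simp⟩
    have := hC.support_nodup
    simp at this ⊢
    tauto

lemma parity_path {G : SimpleGraph V} [DecidableEq V] (col : G.Coloring Bool) (n : V → V)
    (hn : ∀ v, G.Adj v (n v)) (hnn : ∀ v, n (n v) = v) {u v : V} (P : G.Walk u v) (hP : P.IsPath)
    (huv : u ≠ v) (hcol : col u = col v)
    (hinner : ∀ x ∈ P.support, x ≠ u → x ≠ v → n x ∈ P.support) :
    (n u ∉ P.support ∧ n v ∈ P.support) ∨ (n u ∈ P.support ∧ n v ∉ P.support) := by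
  have heven : Even P.length := by
    rw [col.even_length_iff_congr, hcol]
  have hcard : P.support.toFinset.card = P.length + 1 := by
    rw [List.toFinset_card_of_nodup hP.support_nodup, Walk.length_support]
  have hnv : ∀ v, n v ≠ v := fun v => (hn v).ne'
  by_cases hu : n u ∈ P.support <;> by_cases hv : n v ∈ P.support
  · exfalso
    have h : Even P.support.toFinset.card := by
      refine even_card_of_involution _ n ?_ hnv hnn
      intro x hx
      rw [List.mem_toFinset] at hx ⊢
      by_cases h1 : x = u
      · rw [h1]; exact hu
      by_cases h2 : x = v
      · rw [h2]; exact hv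
      exact hinner x hx h1 h2
    rw [hcard] at h
    have := heven.add_one
    exact (Nat.not_even_iff_odd.2 this) h
  · exact Or.inr ⟨hu, hv⟩
  · exact Or.inl ⟨hu, hv⟩
  · exfalso
    have h : Even ((P.support.toFinset.erase u).erase v).card := by
      refine even_card_of_involution _ n ?_ hnv hnn
      intro x hx
      simp only [Finset.mem_erase, List.mem_toFinset] at hx ⊢
      refine ⟨?_, ?_, hinner x hx.2.2 hx.2.1 hx.1⟩
      · intro h
        exact hv ((congrArg n h).symm.trans (hnn x) ▸ hx.2.2)
      · intro h
        exact hu ((congrArg n h).symm.trans (hnn x) ▸ hx.2.2)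
    rw [Finset.card_erase_of_mem (by simp [huv.symm]), Finset.card_erase_of_mem (by simp), hcard] at h
    have hl : P.length ≠ 0 := fun h => huv (Walk.eq_of_length_eq_zero h)
    obtain ⟨k, hk⟩ := heven
    obtain ⟨k', hk'⟩ := h
    omega

lemma fwd_aux [Finite V] [DecidableEq V] {B : SimpleGraph V} (col : B.Coloring Bool)
    (hbrace : IsBrace B) {N : Set (Sym2 V)} (hN : IsPM B N) (n : V → V)
    (hn1 : ∀ v, s(v, n v) ∈ N) (hnn : ∀ v, n (n v) = v)
    {a1 a2 b1 b2 : V} (P1 : B.Walk a1 a2) (P2 : B.Walk b1 b2) (hP1 : P1.IsPath) (hP2 : P2.IsPath)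
    (hd : ∀ x, x ∈ P1.support → x ∉ P2.support) (ha : a1 ≠ a2) (hb : b1 ≠ b2)
    (h11 : B.Adj a1 b1) (h12 : B.Adj a1 b2) (h21 : B.Adj a2 b1) (h22 : B.Adj a2 b2)
    (hedge : ∀ v, v ∈ P1.support ∨ v ∈ P2.support → s(v, n v) ∈ P1.edges ∨ s(v, n v) ∈ P2.edges ∨
      ((v = a1 ∨ v = a2) ∧ (n v = b1 ∨ n v = b2)) ∨ ((v = b1 ∨ v = b2) ∧ (n v = a1 ∨ n v = a2)))
    (hna1 : n a1 ∉ P1.support) (hna2 : n a2 ∈ P1.support) (hnb2 : n b2 ∈ P2.support) :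
    ∃ L : Bisubdivision K33 B, L.ConformalOn Set.univ ∧ s(a1, b1) ∈ L.edgeSet ∧
      s(a1, b2) ∈ L.edgeSet ∧ s(a2, b1) ∈ L.edgeSet ∧ s(a2, b2) ∈ L.edgeSet := by
  have ha1S : a1 ∈ P1.support := by simp
  have ha2S : a2 ∈ P1.support := by simp
  have hb1S : b1 ∈ P2.support := by simp
  have hb2S : b2 ∈ P2.support := by simp
  have hne : ∀ {p q : V}, p ∈ P1.support → q ∈ P2.support → p ≠ q := by
    rintro p q hp hq rfl
    exact hd p hp hq
  have hnab : n a1 = b1 := by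
    rcases hedge a1 (Or.inl ha1S) with h | h | h | h
    · exact absurd (P1.snd_mem_support_of_mem_edges h) hna1
    · exact absurd (P2.fst_mem_support_of_mem_edges h) (hd _ ha1S)
    · rcases h.2 with h | h
      · exact h
      · have h2 : n b2 = a1 := by rw [← h, hnn]
        rw [h2] at hnb2
        exact absurd hnb2 (hd _ ha1S)
    · rcases h.1 with h | h
      · exact absurd h (hne ha1S hb1S)
      · exact absurd h (hne ha1S hb2S)
  obtain ⟨M, hM, hFM⟩ := hbrace.2.2 {s(a1, b1), s(a2, b2)} (by
      rintro e (rfl | rfl)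
      · exact h11
      · exact h22) (by
      have := hne ha1S hb2S
      have := hne ha2S hb1S
      rintro e (rfl | rfl) f (rfl | rfl) hef x hx hx'
      · exact hef rfl
      · simp only [Sym2.mem_iff] at hx hx'
        rcases hx with rfl | rfl <;> rcases hx' with h | h <;> subst h <;> contradiction
      · simp only [Sym2.mem_iff] at hx hx'
        rcases hx with rfl | rfl <;> rcases hx' with h | h <;> subst h <;> contradiction
      · exact hef rfl) (by
      rw [Set.ncard_eq_toFinset_card']; simpa using Finset.card_le_two)
  refine core col hN hM P1 P2 hP1 hP2 hd ha hb h11 h12 h21 h22 (hnab ▸ hn1 a1)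
    (hFM (by simp)) (hFM (by simp)) ?_ ?_
  · intro v hv hva
    refine ⟨s(v, n v), hn1 v, ?_, by simp⟩
    rcases hedge v (Or.inl hv) with h | h | h | h
    · exact h
    · exact absurd (P2.fst_mem_support_of_mem_edges h) (hd _ hv)
    · have h1 := h.1.resolve_left hva
      rw [h1] at h
      rcases h.2 with h | h <;> rw [h] at hna2
      · exact absurd hb1S (hd _ hna2)
      · exact absurd hb2S (hd _ hna2)
    · rcases h.1 with h | h
      · exact absurd h (hne hv hb1S)
      · exact absurd h (hne hv hb2S)
  · intro v hv hvb
    refine ⟨s(v, n v), hn1 v, ?_, by simp⟩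
    rcases hedge v (Or.inr hv) with h | h | h | h
    · exact absurd hv (hd _ (P1.fst_mem_support_of_mem_edges h))
    · exact h
    · rcases h.1 with h | h
      · exact absurd h.symm (hne ha1S hv)
      · exact absurd h.symm (hne ha2S hv)
    · have h1 := h.1.resolve_left hvb
      rw [h1] at h
      rcases h.2 with h | h <;> rw [h] at hnb2
      · exact absurd hnb2 (hd _ ha1S)
      · exact absurd hnb2 (hd _ ha2S)

lemma cyclic_edges {G : SimpleGraph V} {c : V} (C : G.Walk c c) (hC : C.IsCycle)
    (hlen : C.length = 4) {s1 s2 t1 t2 : V} (h : InCyclicOrder G C s1 s2 t1 t2) (e : Sym2 V) :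
    e ∈ C.edges ↔ e = s(s1, s2) ∨ e = s(s2, t1) ∨ e = s(t1, t2) ∨ e = s(t2, s1) := by
  obtain ⟨c1, c2, c3, -, hsup, hed⟩ := c4_cases C hC hlen
  rw [hed]
  obtain ⟨k, h | h⟩ := h
  all_goals
    rw [hsup] at h
    have h := h.eq_of_length (by simp)
    rw [← List.rotate_mod] at h
    have hk : k % 4 < 4 := Nat.mod_lt _ (by norm_num)
    simp only [List.tail_cons, List.length_cons, List.length_nil, List.length_reverse] at h
    norm_num at h
    generalize k % 4 = r at h hk
    interval_cases r <;> simp [List.rotate] at h <;> obtain ⟨rfl, rfl, rfl, rfl⟩ := h <;>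
      simp only [List.mem_cons, List.not_mem_nil, or_false] <;> grind [Sym2.eq_swap]

set_option maxHeartbeats 1000000 in
lemma forward [Finite V] [DecidableEq V] {B : SimpleGraph V} (hbip : IsBipartite B)
    (hbrace : IsBrace B) {c : V} (C : B.Walk c c) (hC : C.IsCycle) (hlen : C.length = 4)
    (h : HasConformalCross B C) :
    ∃ L : Bisubdivision K33 B, L.ConformalOn Set.univ ∧ ∀ f ∈ C.edges, f ∈ L.edgeSet := by
  obtain ⟨col⟩ := coloring_exists hbip
  obtain ⟨M, a1, a2, b1, b2, P1, P2, ⟨-, hnd, hcyc, hP1, hP2, -, -, hd, -, -⟩, N, hN, hmatch⟩ := h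
  have hCe := cyclic_edges C hC hlen hcyc
  have hadj : ∀ {x y}, s(x, y) ∈ C.edges → B.Adj x y := fun h => C.adj_of_mem_edges h
  have h11 : B.Adj a1 b1 := hadj ((hCe _).2 (by simp))
  have h21 : B.Adj a2 b1 := (hadj ((hCe _).2 (by simp))).symm
  have h22 : B.Adj a2 b2 := hadj ((hCe _).2 (by simp))
  have h12 : B.Adj a1 b2 := (hadj ((hCe _).2 (by simp))).symm
  have ha : a1 ≠ a2 := by simp at hnd; tauto
  have hb : b1 ≠ b2 := by simp at hnd; tauto
  obtain ⟨n, hn1, hnn, hnadj, hnu⟩ := partner_exists hN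
  have hcolb : ∀ {x y z : V}, B.Adj x y → B.Adj y z → col x = col z := by
    intro x y z h1 h2
    have h1 := col.valid h1
    have h2 := col.valid h2
    revert h1 h2
    cases col x <;> cases col y <;> cases col z <;> simp
  have hedge : ∀ v, v ∈ P1.support ∨ v ∈ P2.support → s(v, n v) ∈ P1.edges ∨ s(v, n v) ∈ P2.edges ∨
      ((v = a1 ∨ v = a2) ∧ (n v = b1 ∨ n v = b2)) ∨
      ((v = b1 ∨ v = b2) ∧ (n v = a1 ∨ n v = a2)) := by
    intro v hv
    obtain ⟨e, ⟨heN, heE, hve⟩, -⟩ := hmatch v (by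
      rcases hv with hv | hv
      · exact Or.inl (Or.inr hv)
      · exact Or.inr hv)
    obtain ⟨w, rfl⟩ := Sym2.mem_iff_exists.1 hve
    obtain rfl := hnu v w heN
    rcases heE with (heE | heE) | heE
    · right; right
      rcases (hCe _).1 heE with h | h | h | h <;> rw [Sym2.eq_iff] at h <;> tauto
    · exact Or.inl heE
    · exact Or.inr (Or.inl heE)
  have ha1S : a1 ∈ P1.support := by simp
  have ha2S : a2 ∈ P1.support := by simp
  have hb1S : b1 ∈ P2.support := by simp
  have hb2S : b2 ∈ P2.support := by simp
  have par1 := parity_path col n hnadj hnn P1 hP1 ha (hcolb h11 h21.symm) (by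
    intro x hx h1 h2
    rcases hedge x (Or.inl hx) with h | h | h | h
    · exact P1.snd_mem_support_of_mem_edges h
    · exact absurd (P2.fst_mem_support_of_mem_edges h) (hd _ hx)
    · tauto
    · rcases h.1 with rfl | rfl
      · exact absurd hb1S (hd _ hx)
      · exact absurd hb2S (hd _ hx))
  have par2 := parity_path col n hnadj hnn P2 hP2 hb (hcolb h11.symm h12) (by
    intro x hx h1 h2
    rcases hedge x (Or.inr hx) with h | h | h | h
    · exact absurd hx (hd _ (P1.fst_mem_support_of_mem_edges h))
    · exact P2.snd_mem_support_of_mem_edges h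
    · rcases h.1 with rfl | rfl
      · exact absurd hx (hd _ ha1S)
      · exact absurd hx (hd _ ha2S)
    · tauto)
  suffices h : ∃ L : Bisubdivision K33 B, L.ConformalOn Set.univ ∧ s(a1, b1) ∈ L.edgeSet ∧
      s(a1, b2) ∈ L.edgeSet ∧ s(a2, b1) ∈ L.edgeSet ∧ s(a2, b2) ∈ L.edgeSet by
    obtain ⟨L, hL, e11, e12, e21, e22⟩ := h
    refine ⟨L, hL, ?_⟩
    intro f hf
    rcases (hCe _).1 hf with rfl | rfl | rfl | rfl
    · exact e11
    · rw [Sym2.eq_swap]; exact e21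
    · exact e22
    · rw [Sym2.eq_swap]; exact e12
  rcases par1 with ⟨p1, p2⟩ | ⟨p1, p2⟩ <;> rcases par2 with ⟨q1, q2⟩ | ⟨q1, q2⟩
  · exact fwd_aux col hbrace hN n hn1 hnn P1 P2 hP1 hP2 hd ha hb h11 h12 h21 h22 hedge p1 p2 q2
  · obtain ⟨L, hL, e1, e2, e3, e4⟩ := fwd_aux col hbrace hN n hn1 hnn P1 P2.reverse hP1 hP2.reverse
      (by simpa using hd) ha hb.symm h12 h11 h22 h21
      (by simp only [Walk.support_reverse, List.mem_reverse, Walk.edges_reverse]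
          intro v hv
          rcases hedge v hv with h | h | ⟨h, h'⟩ | ⟨h, h'⟩
          · exact Or.inl h
          · exact Or.inr (Or.inl h)
          · exact Or.inr (Or.inr (Or.inl ⟨h, h'.symm⟩))
          · exact Or.inr (Or.inr (Or.inr ⟨h.symm, h'⟩))) p1 p2 (by simpa using q1)
    exact ⟨L, hL, e2, e1, e4, e3⟩
  · obtain ⟨L, hL, e1, e2, e3, e4⟩ := fwd_aux col hbrace hN n hn1 hnn P1.reverse P2 hP1.reverse hP2
      (by simpa using hd) ha.symm hb h21 h22 h11 h12
      (by simp only [Walk.support_reverse, List.mem_reverse, Walk.edges_reverse]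
          intro v hv
          rcases hedge v hv with h | h | ⟨h, h'⟩ | ⟨h, h'⟩
          · exact Or.inl h
          · exact Or.inr (Or.inl h)
          · exact Or.inr (Or.inr (Or.inl ⟨h.symm, h'⟩))
          · exact Or.inr (Or.inr (Or.inr ⟨h, h'.symm⟩))) (by simpa using p2) (by simpa using p1) q2
    exact ⟨L, hL, e3, e4, e1, e2⟩
  · obtain ⟨L, hL, e1, e2, e3, e4⟩ := fwd_aux col hbrace hN n hn1 hnn P1.reverse P2.reverse
      hP1.reverse hP2.reverse
      (by simpa using hd) ha.symm hb.symm h22 h21 h12 h11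
      (by simp only [Walk.support_reverse, List.mem_reverse, Walk.edges_reverse]
          intro v hv
          rcases hedge v hv with h | h | ⟨h, h'⟩ | ⟨h, h'⟩
          · exact Or.inl h
          · exact Or.inr (Or.inl h)
          · exact Or.inr (Or.inr (Or.inl ⟨h.symm, h'.symm⟩))
          · exact Or.inr (Or.inr (Or.inr ⟨h.symm, h'.symm⟩))) (by simpa using p2) (by simpa using p1)
      (by simpa using q1)
    exact ⟨L, hL, e4, e3, e2, e1⟩

/-! ### Matchings on paths -/

lemma IsPMOn.union {G : SimpleGraph V} {S T : Set V} {E F : Set (Sym2 V)}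
    (h1 : IsPMOn G S E) (h2 : IsPMOn G T F) (hd : ∀ v ∈ S, v ∉ T) :
    IsPMOn G (S ∪ T) (E ∪ F) := by
  refine ⟨?_, ?_, ?_⟩
  · rintro e (he | he)
    · exact h1.1 e he
    · exact h2.1 e he
  · rintro e (he | he) v hv
    · exact Or.inl (h1.2.1 e he v hv)
    · exact Or.inr (h2.2.1 e he v hv)
  · rintro v (hv | hv)
    · obtain ⟨e, ⟨he, hve⟩, hu⟩ := h1.2.2 v hv
      refine ⟨e, ⟨Or.inl he, hve⟩, ?_⟩
      rintro f ⟨hf | hf, hvf⟩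
      · exact hu f ⟨hf, hvf⟩
      · exact absurd (h2.2.1 f hf v hvf) (hd v hv)
    · obtain ⟨e, ⟨he, hve⟩, hu⟩ := h2.2.2 v hv
      refine ⟨e, ⟨Or.inr he, hve⟩, ?_⟩
      rintro f ⟨hf | hf, hvf⟩
      · exact absurd hv (hd v (h1.2.1 f hf v hvf))
      · exact hu f ⟨hf, hvf⟩

lemma isPMOn_pair {G : SimpleGraph V} {a b : V} (h : G.Adj a b) :
    IsPMOn G {a, b} {s(a, b)} := by
  refine ⟨?_, ?_, ?_⟩
  · rintro e rfl; exact h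
  · rintro e rfl v hv; simpa using hv
  · intro v hv
    refine ⟨s(a, b), ⟨rfl, by simpa using hv⟩, ?_⟩
    rintro f ⟨rfl, -⟩; rfl

lemma pm_odd {G : SimpleGraph V} (k : ℕ) : ∀ {u v : V} (p : G.Walk u v), p.IsPath →
    p.length = 2 * k + 1 →
    ∃ E, IsPMOn G {x | x ∈ p.support} E ∧ ∀ e ∈ E, e ∈ p.edges := by
  induction k with
  | zero =>
    intro u v p hp hl
    match p, hp, hl with
    | .cons h .nil, _, _ =>
      refine ⟨{s(u, v)}, ?_, ?_⟩
      · convert isPMOn_pair h using 1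
        ext x; simp
      · rintro e rfl; simp
  | succ k ih =>
    intro u v p hp hl
    match p, hp, hl with
    | .cons (v := w) h (.cons h' q), hp, hl =>
      simp only [Walk.length_cons] at hl
      rw [Walk.cons_isPath_iff, Walk.cons_isPath_iff] at hp
      obtain ⟨E, hE, hEe⟩ := ih q hp.1.1 (by omega)
      refine ⟨{s(u, w)} ∪ E, ?_, ?_⟩
      · convert (isPMOn_pair h).union hE ?_ using 1
        · ext x; simp; tauto
        · rintro x (rfl | rfl) hx
          · exact hp.2 (by simp [show x ∈ q.support from hx])
          · exact hp.1.2 hx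
      · rintro e (rfl | he)
        · simp
        · simp [hEe e he]

lemma pm_even {G : SimpleGraph V} {u v : V} (p : G.Walk u v) (hp : p.IsPath)
    (hl : Even p.length) :
    ∃ E, IsPMOn G {x | x ∈ p.support ∧ x ≠ u} E ∧ ∀ e ∈ E, e ∈ p.edges := by
  match p, hp, hl with
  | .nil, _, _ =>
    refine ⟨∅, ⟨by simp, by simp, ?_⟩, by simp⟩
    rintro v ⟨h1, h2⟩
    simp at h1
    exact absurd h1 h2
  | .cons h q, hp, hl =>
    rw [Walk.cons_isPath_iff] at hp
    obtain ⟨k, hk⟩ := hl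
    simp only [Walk.length_cons] at hk
    obtain ⟨E, hE, hEe⟩ := pm_odd (k - 1) q hp.1 (by omega)
    refine ⟨E, ?_, fun e he => by simp [hEe e he]⟩
    convert hE using 1
    ext x
    simp only [Walk.support_cons, List.mem_cons, Set.mem_ofPred_eq]
    constructor
    · rintro ⟨h1 | h1, h2⟩
      · exact absurd h1 h2
      · exact h1
    · intro hx
      exact ⟨Or.inr hx, fun h => hp.2 (h ▸ hx)⟩

lemma pm_interior {G : SimpleGraph V} {u v : V} (p : G.Walk u v) (hp : p.IsPath)
    (hl : Odd p.length) :
    ∃ E, IsPMOn G {x | x ∈ p.support ∧ x ≠ u ∧ x ≠ v} E ∧ ∀ e ∈ E, e ∈ p.edges := by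
  match p, hp, hl with
  | .cons h q, hp, hl =>
    rw [Walk.cons_isPath_iff] at hp
    obtain ⟨k, hk⟩ := hl
    simp only [Walk.length_cons] at hk
    obtain ⟨E, hE, hEe⟩ := pm_even q.reverse hp.1.reverse (by simp; exact ⟨k, by omega⟩)
    refine ⟨E, ?_, fun e he => ?_⟩
    · convert hE using 1
      ext x
      simp only [Walk.support_cons, List.mem_cons, Set.mem_ofPred_eq, Walk.support_reverse,
        List.mem_reverse]
      constructor
      · rintro ⟨h1 | h1, h2, h3⟩
        · exact absurd h1 h2
        · exact ⟨h1, h3⟩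
      · rintro ⟨hx, h3⟩
        exact ⟨Or.inr hx, fun h => hp.2 (h ▸ hx), h3⟩
    · have := hEe e he
      simp at this
      simp [this]

/-! ### Locating a 4-cycle in a bisubdivision -/

lemma edge_ends_length {G : SimpleGraph V} {u v : V} (p : G.Walk u v) (hp : p.IsPath)
    (h : s(u, v) ∈ p.edges) : ∀ x ∈ p.support, x = u ∨ x = v := by
  rw [Walk.mk_mem_edges_iff_exists] at h
  obtain ⟨i, hi, h⟩ := h
  have inj : ∀ a b, a ≤ p.length → b ≤ p.length → p.getVert a = p.getVert b → a = b :=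
    fun a b ha hb h => hp.getVert_injOn (by simpa using ha) (by simpa using hb) h
  have h0 : p.getVert 0 = u := by simp
  have hL : p.getVert p.length = v := by simp
  have hlen : p.length = 1 := by
    rcases Sym2.eq_iff.1 h with ⟨h1, h2⟩ | ⟨h1, h2⟩
    · have := inj i 0 (by omega) (by omega) (h1.trans h0.symm)
      have := inj (i + 1) p.length (by omega) (by omega) (h2.trans hL.symm)
      omega
    · have := inj (i + 1) 0 (by omega) (by omega) (h2.trans h0.symm)
      omega
  intro x hx
  obtain ⟨j, rfl, hj⟩ := Walk.mem_support_iff_exists_getVert.1 hx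
  obtain rfl | rfl : j = 0 ∨ j = 1 := by omega
  · left; exact h0
  · right; rw [← hlen]; exact hL

lemma path_no_c4 {G : SimpleGraph V} {u v : V} (p : G.Walk u v) (hp : p.IsPath)
    {c0 c1 c2 c3 : V} (hnd : [c0, c1, c2, c3].Nodup)
    (h0 : s(c0, c1) ∈ p.edges) (h1 : s(c1, c2) ∈ p.edges) (h2 : s(c2, c3) ∈ p.edges)
    (h3 : s(c3, c0) ∈ p.edges) : False := by
  have inj : ∀ a b, a ≤ p.length → b ≤ p.length → p.getVert a = p.getVert b → a = b :=
    fun a b ha hb h => hp.getVert_injOn (by simpa using ha) (by simpa using hb) h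
  have pos : ∀ x ∈ p.support, ∃ i, i ≤ p.length ∧ p.getVert i = x := by
    intro x hx
    obtain ⟨j, hj, hj'⟩ := Walk.mem_support_iff_exists_getVert.1 hx
    exact ⟨j, hj', hj⟩
  obtain ⟨i0, l0, g0⟩ := pos _ (p.fst_mem_support_of_mem_edges h0)
  obtain ⟨i1, l1, g1⟩ := pos _ (p.fst_mem_support_of_mem_edges h1)
  obtain ⟨i2, l2, g2⟩ := pos _ (p.fst_mem_support_of_mem_edges h2)
  obtain ⟨i3, l3, g3⟩ := pos _ (p.fst_mem_support_of_mem_edges h3)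
  have step : ∀ a b x y, a ≤ p.length → b ≤ p.length → p.getVert a = x → p.getVert b = y →
      s(x, y) ∈ p.edges → a = b + 1 ∨ b = a + 1 := by
    intro a b x y ha hb hx hy h
    rw [Walk.mk_mem_edges_iff_exists] at h
    obtain ⟨i, hi, h⟩ := h
    rcases Sym2.eq_iff.1 h with ⟨h1, h2⟩ | ⟨h1, h2⟩
    · have := inj i a (by omega) ha (h1.trans hx.symm)
      have := inj (i + 1) b (by omega) hb (h2.trans hy.symm)
      omega
    · have := inj i b (by omega) hb (h1.trans hy.symm)
      have := inj (i + 1) a (by omega) ha (h2.trans hx.symm)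
      omega
  have s0 := step _ _ _ _ l0 l1 g0 g1 h0
  have s1 := step _ _ _ _ l1 l2 g1 g2 h1
  have s2 := step _ _ _ _ l2 l3 g2 g3 h2
  have s3 := step _ _ _ _ l3 l0 g3 g0 h3
  have n02 : i0 ≠ i2 := by
    rintro rfl
    have : c0 = c2 := g0.symm.trans g2
    simp [this] at hnd
  have n13 : i1 ≠ i3 := by
    rintro rfl
    have : c1 = c3 := g1.symm.trans g3
    simp [this] at hnd
  omega

section Bisub
variable {H : SimpleGraph W} {G : SimpleGraph V} (L : Bisubdivision H G)

lemma link_eq {x y x' y' : W} (h : H.Adj x y) (h' : H.Adj x' y') (he : s(x, y) = s(x', y')) :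
    (∀ v, v ∈ (L.link h).support ↔ v ∈ (L.link h').support) ∧
      ∀ e, e ∈ (L.link h).edges ↔ e ∈ (L.link h').edges := by
  rcases Sym2.eq_iff.1 he with ⟨rfl, rfl⟩ | ⟨rfl, rfl⟩
  · exact ⟨fun _ => Iff.rfl, fun _ => Iff.rfl⟩
  · have := L.link_symm h
    rw [this]
    simp

lemma two_common {x y x' y' : W} (h : H.Adj x y) (h' : H.Adj x' y') {u v : V} (huv : u ≠ v)
    (h1 : u ∈ (L.link h).support) (h2 : u ∈ (L.link h').support)
    (h3 : v ∈ (L.link h).support) (h4 : v ∈ (L.link h').support) : s(x, y) = s(x', y') := by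
  by_contra hne
  obtain ⟨a1, a2⟩ := L.link_meet h h' hne u h1 h2
  obtain ⟨b1, b2⟩ := L.link_meet h h' hne v h3 h4
  have inj : ∀ {a b : W} {u : V}, u = L.bv a → u = L.bv b → a = b :=
    fun h1 h2 => L.bv_inj (h1.symm.trans h2)
  apply hne
  rw [Sym2.eq_iff]
  rcases a1 with a1 | a1 <;> rcases b1 with b1 | b1
  · exact absurd (a1.trans b1.symm) huv
  · rcases a2 with a2 | a2 <;> rcases b2 with b2 | b2
    · exact absurd (a2.trans b2.symm) huv
    · exact Or.inl ⟨inj a1 a2, inj b1 b2⟩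
    · exact Or.inr ⟨inj a1 a2, inj b1 b2⟩
    · exact absurd (a2.trans b2.symm) huv
  · rcases a2 with a2 | a2 <;> rcases b2 with b2 | b2
    · exact absurd (a2.trans b2.symm) huv
    · exact Or.inr ⟨inj b1 b2, inj a1 a2⟩
    · exact Or.inl ⟨inj b1 b2, inj a1 a2⟩
    · exact absurd (a2.trans b2.symm) huv
  · exact absurd (a1.trans b1.symm) huv

lemma c4_branch (col : G.Coloring Bool) {c0 c1 c2 c3 : V} (hnd : [c0, c1, c2, c3].Nodup)
    (h0 : s(c0, c1) ∈ L.edgeSet) (h1 : s(c1, c2) ∈ L.edgeSet) (h2 : s(c2, c3) ∈ L.edgeSet)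
    (h3 : s(c3, c0) ∈ L.edgeSet) : ∃ x, c1 = L.bv x := by
  obtain ⟨x0, y0, a0, e0⟩ := h0
  obtain ⟨x1, y1, a1, e1⟩ := h1
  obtain ⟨x2, y2, a2, e2⟩ := h2
  obtain ⟨x3, y3, a3, e3⟩ := h3
  have u0 := (L.link a0).fst_mem_support_of_mem_edges e0
  have v0 := (L.link a0).snd_mem_support_of_mem_edges e0
  have u1 := (L.link a1).fst_mem_support_of_mem_edges e1
  have v1 := (L.link a1).snd_mem_support_of_mem_edges e1
  have u2 := (L.link a2).fst_mem_support_of_mem_edges e2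
  have v2 := (L.link a2).snd_mem_support_of_mem_edges e2
  have u3 := (L.link a3).fst_mem_support_of_mem_edges e3
  have v3 := (L.link a3).snd_mem_support_of_mem_edges e3
  have hnd' := hnd
  simp only [List.nodup_cons, List.mem_cons, not_or, List.not_mem_nil, not_false_eq_true,
    List.nodup_nil, and_true] at hnd'
  obtain ⟨⟨n01, n02, n03⟩, ⟨n12, n13⟩, n23⟩ := hnd'
  by_cases h01 : s(x0, y0) = s(x1, y1)
  · exfalso
    have E1 := link_eq L a0 a1 h01
    have v1' := (E1.1 _).2 v1
    have e1' := (E1.2 _).2 e1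
    by_cases h02 : s(x0, y0) = s(x2, y2)
    · have E2 := link_eq L a0 a2 h02
      have h03 := two_common L a0 a3 n03 u0 v3 ((E2.1 _).2 v2) u3
      have E3 := link_eq L a0 a3 h03
      exact path_no_c4 _ (L.link_isPath a0) hnd e0 e1' ((E2.2 _).2 e2) ((E3.2 _).2 e3)
    · by_cases h03 : s(x0, y0) = s(x3, y3)
      · have E3 := link_eq L a0 a3 h03
        exact h02 (two_common L a0 a2 n23 v1' u2 ((E3.1 _).2 u3) v2)
      · obtain ⟨p, -⟩ := L.link_meet a0 a3 h03 c0 u0 v3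
        obtain ⟨q, -⟩ := L.link_meet a0 a2 h02 c2 v1' u2
        have hodd := L.link_odd a0
        rw [col.odd_length_iff_not_congr] at hodd
        have ad0 := col.valid ((L.link a0).adj_of_mem_edges e0)
        have ad1 := col.valid ((L.link a1).adj_of_mem_edges e1)
        rcases p with p | p <;> rcases q with q | q
        · exact n02 (p.trans q.symm)
        · rw [← p, ← q] at hodd
          revert hodd ad0 ad1
          cases col c0 <;> cases col c1 <;> cases col c2 <;> simp
        · rw [← p, ← q] at hodd
          revert hodd ad0 ad1
          cases col c0 <;> cases col c1 <;> cases col c2 <;> simp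
        · exact n02 (p.trans q.symm)
  · obtain ⟨p | p, -⟩ := L.link_meet a0 a1 h01 c1 v0 u1
    · exact ⟨_, p⟩
    · exact ⟨_, p⟩

lemma bv_edge {x y : W} (hxy : x ≠ y) (h : s(L.bv x, L.bv y) ∈ L.edgeSet) :
    ∃ a : H.Adj x y, ∀ v ∈ (L.link a).support, v = L.bv x ∨ v = L.bv y := by
  obtain ⟨x', y', a', e'⟩ := h
  have hx := L.link_branch a' x ((L.link a').fst_mem_support_of_mem_edges e')
  have hy := L.link_branch a' y ((L.link a').snd_mem_support_of_mem_edges e')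
  have key : s(x, y) = s(x', y') := by
    rw [Sym2.eq_iff]
    rcases hx with hx | hx <;> rcases hy with hy | hy
    · exact absurd (hx.trans hy.symm) hxy
    · exact Or.inl ⟨hx, hy⟩
    · exact Or.inr ⟨hx, hy⟩
    · exact absurd (hx.trans hy.symm) hxy
  have a : H.Adj x y := by
    rw [← SimpleGraph.mem_edgeSet, key]; exact a'
  refine ⟨a, edge_ends_length _ (L.link_isPath a) ?_⟩
  exact ((link_eq L a a' key).2 _).2 e'

/-- Concatenation of two links at a branch vertex. -/
lemma append_isPath {x y z : W} (a : H.Adj x y) (b : H.Adj y z) (hxz : x ≠ z) :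
    ((L.link a).append (L.link b)).IsPath := by
  rw [Walk.isPath_def, Walk.support_append, List.nodup_append]
  refine ⟨(L.link_isPath a).support_nodup, (L.link_isPath b).support_nodup.tail, ?_⟩
  rintro v hv w hw rfl
  have hne : s(x, y) ≠ s(y, z) := by
    intro h
    rcases Sym2.eq_iff.1 h with ⟨h1, h2⟩ | ⟨h1, h2⟩
    · exact a.ne h1
    · exact hxz h1
  have h2 := (L.link_isPath b).support_nodup
  rw [← Walk.cons_tail_support, List.nodup_cons] at h2
  obtain ⟨h3, h4⟩ := L.link_meet a b hne v hv (List.mem_of_mem_tail hw)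
  rcases h3 with rfl | rfl
  · rcases h4 with h4 | h4
    · exact a.ne (L.bv_inj h4)
    · exact hxz (L.bv_inj h4)
  · exact h2.1 hw

end Bisub

lemma K33_complete {x0 x1 x2 x3 : Fin 3 ⊕ Fin 3} (hnd : [x0, x1, x2, x3].Nodup)
    (h0 : K33.Adj x0 x1) (h1 : K33.Adj x1 x2) (h2 : K33.Adj x2 x3) (h3 : K33.Adj x3 x0) :
    ∃ y z, [x0, x1, x2, x3, y, z].Nodup ∧ K33.Adj x0 y ∧ K33.Adj y x2 ∧ K33.Adj x1 z ∧
      K33.Adj z x3 ∧ K33.Adj y z ∧ ∀ p q, K33.Adj p q → s(p, q) ∈ [s(x0, x1), s(x1, x2),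
        s(x2, x3), s(x3, x0), s(x0, y), s(y, x2), s(x1, z), s(z, x3), s(y, z)] := by
  have key2 : ∀ i k : Fin 3, i ≠ k → ∃ j, j ≠ i ∧ j ≠ k ∧ ∀ l : Fin 3, l = j ∨ l = i ∨ l = k := by
    decide
  rcases x0 with i0 | i0 <;> rcases x1 with i1 | i1 <;> simp at h0 <;>
  rcases x2 with i2 | i2 <;> simp at h1 <;> rcases x3 with i3 | i3 <;> simp at h2
  all_goals
    have n02 : i0 ≠ i2 := by rintro rfl; simp at hnd
    have n13 : i1 ≠ i3 := by rintro rfl; simp at hnd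
    obtain ⟨z, z1, z2, z3⟩ := key2 i0 i2 n02
    obtain ⟨y, y1, y2, y3⟩ := key2 i1 i3 n13
  · refine ⟨Sum.inr y, Sum.inl z, ?_, by simp, by simp, by simp, by simp, by simp, ?_⟩
    · simp [n02, n13, y1.symm, y2.symm, z1.symm, z2.symm]
    · rintro (p | p) (q | q) h <;> simp at h
      · rcases z3 p with rfl | rfl | rfl <;> rcases y3 q with rfl | rfl | rfl <;> simp
      · rcases z3 q with rfl | rfl | rfl <;> rcases y3 p with rfl | rfl | rfl <;> simp
  · refine ⟨Sum.inl y, Sum.inr z, ?_, by simp, by simp, by simp, by simp, by simp, ?_⟩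
    · simp [n02, n13, y1.symm, y2.symm, z1.symm, z2.symm]
    · rintro (p | p) (q | q) h <;> simp at h
      · rcases z3 q with rfl | rfl | rfl <;> rcases y3 p with rfl | rfl | rfl <;> simp
      · rcases z3 p with rfl | rfl | rfl <;> rcases y3 q with rfl | rfl | rfl <;> simp

lemma link_disj {H : SimpleGraph W} {G : SimpleGraph V} (L : Bisubdivision H G)
    {x y x' y' : W} (h : H.Adj x y) (h' : H.Adj x' y') (h1 : x ≠ x') (h2 : x ≠ y')
    (h3 : y ≠ x') (h4 : y ≠ y') (v : V) (hv : v ∈ (L.link h).support)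
    (hv' : v ∈ (L.link h').support) : False := by
  have hne : s(x, y) ≠ s(x', y') := by
    intro h
    rcases Sym2.eq_iff.1 h with ⟨h5, h6⟩ | ⟨h5, h6⟩
    · exact h1 h5
    · exact h2 h5
  obtain ⟨p, q⟩ := L.link_meet h h' hne v hv hv'
  rcases p with rfl | rfl <;> rcases q with q | q
  · exact h1 (L.bv_inj q)
  · exact h2 (L.bv_inj q)
  · exact h3 (L.bv_inj q)
  · exact h4 (L.bv_inj q)

/-- Two links sharing the end `y` meet only there. -/
lemma link_share {H : SimpleGraph W} {G : SimpleGraph V} (L : Bisubdivision H G)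
    {x y z : W} (a : H.Adj x y) (b : H.Adj y z) (hxz : x ≠ z) (v : V)
    (hv : v ∈ (L.link a).support) (hv' : v ∈ (L.link b).support) : v = L.bv y := by
  have hne : s(x, y) ≠ s(y, z) := by
    intro h
    rcases Sym2.eq_iff.1 h with ⟨h1, h2⟩ | ⟨h1, h2⟩
    · exact a.ne h1
    · exact hxz h1
  obtain ⟨h3, h4⟩ := L.link_meet a b hne v hv hv'
  rcases h3 with rfl | rfl
  · rcases h4 with h4 | h4
    · exact h4
    · exact absurd (L.bv_inj h4) hxz
  · rfl

lemma pm_outside {H : SimpleGraph W} {G : SimpleGraph V} (L : Bisubdivision H G)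
    {M : Set (Sym2 V)} (hM : IsPM G M) (hL : L.MConformal M) :
    IsPMOn G (L.verts)ᶜ {e | e ∈ M ∧ ∀ v ∈ e, v ∉ L.verts} := by
  refine ⟨fun e he => hM.1 e he.1, fun e he v hv => he.2 v hv, ?_⟩
  intro v hv
  obtain ⟨e, ⟨he, hve⟩, hu⟩ := hM.2.2 v (Set.mem_univ v)
  refine ⟨e, ⟨⟨he, ?_⟩, hve⟩, fun f hf => hu f ⟨hf.1.1, hf.2⟩⟩
  intro w hw hwL
  obtain ⟨f, ⟨hf, hfL, hwf⟩, -⟩ := hL w hwL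
  have : f = e := (hM.2.2 w (Set.mem_univ w)).unique ⟨hf, hwf⟩ ⟨he, hw⟩
  subst this
  obtain ⟨x, y, h, hfe⟩ := hfL
  exact hv ⟨x, y, h, Walk.mem_support_of_mem_edges hfe hve⟩

lemma walkConf_of {G : SimpleGraph V} {N E : Set (Sym2 V)} (hN : IsPM G N) {u v : V}
    (P : G.Walk u v) (A : Set V) (hE : IsPMOn G A E) (hEN : E ⊆ N)
    (hEP : ∀ e ∈ E, e ∈ P.edges) : WalkMConfOn G N P A := by
  intro x hx
  obtain ⟨e, ⟨he, hxe⟩, -⟩ := hE.2.2 x hx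
  refine ⟨e, ⟨hEN he, hEP e he, hE.2.1 e he, hxe⟩, ?_⟩
  rintro f ⟨hf, -, -, hxf⟩
  exact (hN.2.2 x (Set.mem_univ x)).unique ⟨hf, hxf⟩ ⟨hEN he, hxe⟩

set_option maxHeartbeats 1000000 in
lemma backward {B : SimpleGraph V} (hbip : IsBipartite B)
    {c : V} (C : B.Walk c c) (hC : C.IsCycle) (hlen : C.length = 4)
    (h : ∃ L : Bisubdivision K33 B, L.ConformalOn Set.univ ∧ ∀ f ∈ C.edges, f ∈ L.edgeSet) :
    HasConformalCross B C := by
  obtain ⟨col⟩ := coloring_exists hbip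
  obtain ⟨L, ⟨M, hM, hLM⟩, hCL⟩ := h
  obtain ⟨c1, c2, c3, hnd, hsup, hedges⟩ := c4_cases C hC hlen
  have f0 : s(c, c1) ∈ L.edgeSet := hCL _ (by simp [hedges])
  have f1 : s(c1, c2) ∈ L.edgeSet := hCL _ (by simp [hedges])
  have f2 : s(c2, c3) ∈ L.edgeSet := hCL _ (by simp [hedges])
  have f3 : s(c3, c) ∈ L.edgeSet := hCL _ (by simp [hedges])
  have hrot : ∀ {a b c d : V}, [a, b, c, d].Nodup → [b, c, d, a].Nodup := by
    intro a b c d h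
    simpa using (List.nodup_rotate (n := 1)).2 h
  obtain ⟨x1, g1⟩ := c4_branch L col hnd f0 f1 f2 f3
  obtain ⟨x2, g2⟩ := c4_branch L col (hrot hnd) f1 f2 f3 f0
  obtain ⟨x3, g3⟩ := c4_branch L col (hrot (hrot hnd)) f2 f3 f0 f1
  obtain ⟨x0, g0⟩ := c4_branch L col (hrot (hrot (hrot hnd))) f3 f0 f1 f2
  have hsup' : C.support = [L.bv x0, L.bv x1, L.bv x2, L.bv x3, L.bv x0] := by
    rw [hsup, ← g0, ← g1, ← g2, ← g3]
  have hedges' : s(L.bv x0, L.bv x1) ∈ C.edges := by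
    rw [hedges, ← g0, ← g1]; simp
  have hndb : ([x0, x1, x2, x3].map L.bv).Nodup := by
    rw [g0, g1, g2, g3] at hnd; exact hnd
  have hndx : [x0, x1, x2, x3].Nodup := List.Nodup.of_map _ hndb
  rw [g0, g1] at f0
  rw [g1, g2] at f1
  rw [g2, g3] at f2
  rw [g3, g0] at f3
  clear g0 g1 g2 g3 hsup hedges hnd hCL
  have hx := hndx
  simp only [List.nodup_cons, List.mem_cons, not_or, List.not_mem_nil, not_false_eq_true,
    List.nodup_nil, and_true] at hx
  obtain ⟨⟨n01, n02, n03⟩, ⟨n12, n13⟩, n23⟩ := hx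
  obtain ⟨a01, l01⟩ := bv_edge L n01 f0
  obtain ⟨a12, l12⟩ := bv_edge L n12 f1
  obtain ⟨a23, l23⟩ := bv_edge L n23 f2
  obtain ⟨a30, l30⟩ := bv_edge L (Ne.symm n03) f3
  obtain ⟨y, z, hnd6, ay0, ay2, az1, az3, ayz, hall⟩ := K33_complete hndx a01 a12 a23 a30
  simp only [List.nodup_cons, List.mem_cons, not_or, List.not_mem_nil, not_false_eq_true,
    List.nodup_nil, and_true] at hnd6
  obtain ⟨⟨-, -, -, n0y, n0z⟩, ⟨-, -, n1y, n1z⟩, ⟨-, n2y, n2z⟩, ⟨n3y, n3z⟩, nyz⟩ := hnd6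
  have hadj : B.Adj (L.bv x0) (L.bv x1) := C.adj_of_mem_edges hedges'
  obtain ⟨P1, hP1⟩ : ∃ P : B.Walk (L.bv x0) (L.bv x2), P = (L.link ay0).append (L.link ay2) :=
    ⟨_, rfl⟩
  obtain ⟨P2, hP2⟩ : ∃ P : B.Walk (L.bv x1) (L.bv x3), P = (L.link az1).append (L.link az3) :=
    ⟨_, rfl⟩
  have path1 : P1.IsPath := hP1 ▸ append_isPath L ay0 ay2 n02
  have path2 : P2.IsPath := hP2 ▸ append_isPath L az1 az3 n13
  have ev1 : Even P1.length := by
    rw [hP1, Walk.length_append]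
    exact (L.link_odd ay0).add_odd (L.link_odd ay2)
  have ev2 : Even P2.length := by
    rw [hP2, Walk.length_append]
    exact (L.link_odd az1).add_odd (L.link_odd az3)
  have sup1 : ∀ v, v ∈ P1.support ↔ v ∈ (L.link ay0).support ∨ v ∈ (L.link ay2).support := by
    intro v; rw [hP1, Walk.mem_support_append_iff]
  have sup2 : ∀ v, v ∈ P2.support ↔ v ∈ (L.link az1).support ∨ v ∈ (L.link az3).support := by
    intro v; rw [hP2, Walk.mem_support_append_iff]
  have disj : ∀ v, v ∈ P1.support → v ∉ P2.support := by
    intro v h1 h2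
    rw [sup1] at h1
    rw [sup2] at h2
    rcases h1 with h1 | h1 <;> rcases h2 with h2 | h2
    · exact link_disj L ay0 az1 n01 n0z (Ne.symm n1y) nyz v h1 h2
    · exact link_disj L ay0 az3 n0z n03 nyz (Ne.symm n3y) v h1 h2
    · exact link_disj L ay2 az1 (Ne.symm n1y) nyz (Ne.symm n12) n2z v h1 h2
    · exact link_disj L ay2 az3 nyz (Ne.symm n3y) n2z n23 v h1 h2
  have meet1 : ∀ v, v ∈ P1.support → v ∈ (L.link ayz).support → v = L.bv y := by
    intro v h1 h2
    rw [sup1] at h1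
    rcases h1 with h1 | h1
    · exact link_share L ay0 ayz n0z v h1 h2
    · refine link_share L ay2.symm ayz n2z v ?_ h2
      rw [L.link_symm]; simpa using h1
  have meet2 : ∀ v, v ∈ P2.support → v ∈ (L.link ayz).support → v = L.bv z := by
    intro v h1 h2
    have h2' : v ∈ (L.link ayz.symm).support := by rw [L.link_symm]; simpa using h2
    rw [sup2] at h1
    rcases h1 with h1 | h1
    · exact link_share L az1 ayz.symm n1y v h1 h2'
    · refine link_share L az3.symm ayz.symm n3y v ?_ h2'
      rw [L.link_symm]; simpa using h1
  have s0 : L.bv x0 ∈ P1.support := P1.start_mem_support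
  have s2 : L.bv x2 ∈ P1.support := P1.end_mem_support
  have s1 : L.bv x1 ∈ P2.support := P2.start_mem_support
  have s3 : L.bv x3 ∈ P2.support := P2.end_mem_support
  have sy : L.bv y ∈ P1.support := (sup1 _).2 (Or.inl (Walk.end_mem_support _))
  have sz : L.bv z ∈ P2.support := (sup2 _).2 (Or.inl (Walk.end_mem_support _))
  have sub1 : ∀ v ∈ P1.support, v ∈ L.verts := by
    intro v hv
    rcases (sup1 v).1 hv with h | h
    · exact ⟨_, _, _, h⟩
    · exact ⟨_, _, _, h⟩
  have sub2 : ∀ v ∈ P2.support, v ∈ L.verts := by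
    intro v hv
    rcases (sup2 v).1 hv with h | h
    · exact ⟨_, _, _, h⟩
    · exact ⟨_, _, _, h⟩
  have cover : ∀ v ∈ L.verts, v ∈ P1.support ∨ v ∈ P2.support ∨ v ∈ (L.link ayz).support := by
    rintro v ⟨p, q, a, hv⟩
    have hpq := hall p q a
    simp only [List.mem_cons, List.not_mem_nil, or_false] at hpq
    have tr : ∀ {p' q' : Fin 3 ⊕ Fin 3} (a' : K33.Adj p' q'), s(p, q) = s(p', q') →
        v ∈ (L.link a').support := fun a' he => ((link_eq L a a' he).1 v).1 hv
    rcases hpq with h | h | h | h | h | h | h | h | h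
    · rcases l01 v (tr a01 h) with rfl | rfl
      · exact Or.inl s0
      · exact Or.inr (Or.inl s1)
    · rcases l12 v (tr a12 h) with rfl | rfl
      · exact Or.inr (Or.inl s1)
      · exact Or.inl s2
    · rcases l23 v (tr a23 h) with rfl | rfl
      · exact Or.inl s2
      · exact Or.inr (Or.inl s3)
    · rcases l30 v (tr a30 h) with rfl | rfl
      · exact Or.inr (Or.inl s3)
      · exact Or.inl s0
    · exact Or.inl ((sup1 v).2 (Or.inl (tr ay0 h)))
    · exact Or.inl ((sup1 v).2 (Or.inr (tr ay2 h)))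
    · exact Or.inr (Or.inl ((sup2 v).2 (Or.inl (tr az1 h))))
    · exact Or.inr (Or.inl ((sup2 v).2 (Or.inr (tr az3 h))))
    · exact Or.inr (Or.inr (tr ayz h))
  obtain ⟨E1, hE1, hE1e⟩ := pm_even P1 path1 ev1
  obtain ⟨E2, hE2, hE2e⟩ := pm_even P2 path2 ev2
  obtain ⟨E3, hE3, -⟩ := pm_interior (L.link ayz) (L.link_isPath ayz) (L.link_odd ayz)
  have hE5 := pm_outside L hM hLM
  have u1 := hE1.union hE2 (by
    rintro v ⟨h1, -⟩ ⟨h2, -⟩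
    exact disj v h1 h2)
  have u2 := (isPMOn_pair hadj).union u1 (by
    rintro v (rfl | rfl) (⟨h1, h2⟩ | ⟨h1, h2⟩)
    · exact h2 rfl
    · exact disj _ s0 h1
    · exact disj _ h1 s1
    · exact h2 rfl)
  have u3 := u2.union hE3 (by
    rintro v h ⟨h1, h2, h3⟩
    have : v ∈ P1.support ∨ v ∈ P2.support := by
      rcases h with (rfl | rfl) | ⟨h, -⟩ | ⟨h, -⟩
      · exact Or.inl s0
      · exact Or.inr s1
      · exact Or.inl h
      · exact Or.inr h
    rcases this with h | h
    · exact h2 (meet1 v h h1)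
    · exact h3 (meet2 v h h1))
  have u4 := u3.union hE5 (by
    rintro v h hv
    apply hv
    rcases h with ((rfl | rfl) | ⟨h, -⟩ | ⟨h, -⟩) | ⟨h, -⟩
    · exact sub1 _ s0
    · exact sub2 _ s1
    · exact sub1 _ h
    · exact sub2 _ h
    · exact ⟨_, _, _, h⟩)
  generalize hN : (({s(L.bv x0, L.bv x1)} ∪ (E1 ∪ E2)) ∪ E3) ∪
    {e | e ∈ M ∧ ∀ v ∈ e, v ∉ L.verts} = N at u4
  have hPM : IsPM B N := by
    unfold IsPM
    convert u4 using 1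
    ext v
    refine ⟨fun _ => ?_, fun _ => Set.mem_univ v⟩
    by_cases hv : v ∈ L.verts
    · left
      rcases cover v hv with h | h | h
      · left
        by_cases h0 : v = L.bv x0
        · exact Or.inl (Or.inl h0)
        · exact Or.inr (Or.inl ⟨h, h0⟩)
      · left
        by_cases h0 : v = L.bv x1
        · exact Or.inl (Or.inr h0)
        · exact Or.inr (Or.inr ⟨h, h0⟩)
      · by_cases hy : v = L.bv y
        · left; right; left
          rw [hy]
          exact ⟨sy, fun h => n0y (L.bv_inj h).symm⟩
        by_cases hz : v = L.bv z
        · left; right; right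
          rw [hz]
          exact ⟨sz, fun h => n1z (L.bv_inj h).symm⟩
        exact Or.inr ⟨h, hy, hz⟩
    · exact Or.inr hv
  have m0 : s(L.bv x0, L.bv x1) ∈ N := by
    rw [← hN]; exact Or.inl (Or.inl (Or.inl rfl))
  have m1 : E1 ⊆ N := by
    rw [← hN]; exact fun e he => Or.inl (Or.inl (Or.inr (Or.inl he)))
  have m2 : E2 ⊆ N := by
    rw [← hN]; exact fun e he => Or.inl (Or.inl (Or.inr (Or.inr he)))
  have hCs : ∀ v, v ∈ C.support → v = L.bv x0 ∨ v = L.bv x1 ∨ v = L.bv x2 ∨ v = L.bv x3 := by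
    intro v hv
    rw [hsup'] at hv
    simp only [List.mem_cons, List.not_mem_nil, or_false] at hv
    rcases hv with h | h | h | h | h
    · exact Or.inl h
    · exact Or.inr (Or.inl h)
    · exact Or.inr (Or.inr (Or.inl h))
    · exact Or.inr (Or.inr (Or.inr h))
    · exact Or.inl h
  refine ⟨N, _, _, _, _, P1, P2, ⟨hPM, hndb, ⟨3, Or.inl ?_⟩, path1, path2, ?_, ?_, disj, ?_, ?_⟩,
    N, hPM, matchesExactly_of_exists hPM ?_⟩
  · rw [hsup']
    exact List.Sublist.refl _
  · exact ⟨{L.bv x0}, by simp, walkConf_of hPM P1 _ hE1 m1 hE1e⟩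
  · exact ⟨{L.bv x1}, by simp, walkConf_of hPM P2 _ hE2 m2 hE2e⟩
  · intro v hv h1 h2 hvC
    rcases hCs v hvC with rfl | rfl | rfl | rfl
    · exact h1 rfl
    · exact disj _ hv s1
    · exact h2 rfl
    · exact disj _ hv s3
  · intro v hv h1 h2 hvC
    rcases hCs v hvC with rfl | rfl | rfl | rfl
    · exact disj _ s0 hv
    · exact h1 rfl
    · exact disj _ s2 hv
    · exact h2 rfl
  · intro v hv
    have hv' : v ∈ P1.support ∨ v ∈ P2.support := by
      rcases hv with (hv | hv) | hv
      · rcases hCs v hv with rfl | rfl | rfl | rfl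
        · exact Or.inl s0
        · exact Or.inr s1
        · exact Or.inl s2
        · exact Or.inr s3
      · exact Or.inl hv
      · exact Or.inr hv
    rcases hv' with h | h
    · by_cases h0 : v = L.bv x0
      · exact ⟨_, m0, Or.inl (Or.inl hedges'), by simp [h0]⟩
      · obtain ⟨e, ⟨he, hve⟩, -⟩ := hE1.2.2 v ⟨h, h0⟩
        exact ⟨e, m1 he, Or.inl (Or.inr (hE1e e he)), hve⟩
    · by_cases h0 : v = L.bv x1
      · exact ⟨_, m0, Or.inl (Or.inl hedges'), by simp [h0]⟩
      · obtain ⟨e, ⟨he, hve⟩, -⟩ := hE2.2.2 v ⟨h, h0⟩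
        exact ⟨e, m2 he, Or.inr (hE2e e he), hve⟩

/-- a 4-cycle in a brace has a conformal cross iff it is contained in a
conformal bisubdivision of `K₃,₃`. -/
theorem statement_1 {V : Type*} [Fintype V] [DecidableEq V] (B : SimpleGraph V)
    (hbip : IsBipartite B) (hbrace : IsBrace B)
    {c : V} (C : B.Walk c c) (hC : C.IsCycle) (hlen : C.length = 4) :
    HasConformalCross B C ↔
      ∃ L : Bisubdivision K33 B, L.ConformalOn Set.univ ∧ ∀ f ∈ C.edges, f ∈ L.edgeSet := by
  exact ⟨forward hbip hbrace C hC hlen, backward hbip C hC hlen⟩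

end Paper
end
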